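/- arXiv:2406.00331 — 2 statements merged into one kernel-verified Lean document; each statement's English description precedes it below -/
import Mathlib

section
/- For every positive integer k, for each ρ ∈ [0,1) and each x ≥ 1 the series Σ_{n=0}^∞ (-1)^n ℓ_{n,k} L_n(log x) ρ^n converges absolutely, and for almost every x ≥ 1 (with respect to Lebesgue measure) one has Δ_k(x) = lim_{ρ→1⁻} Σ_{n=0}^∞ (-1)^n ℓ_{n,k} L_n(log x) ρ^n. -/
open scoped Real Topology
open Complex Filter MeasureTheory Finset Asymptotics

/-- The analytic extension of `s ↦ ((s-1) * ζ(s))^k` to `s = 1` (where its value is `1`). -/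
noncomputable def zetaPowAux (k : ℕ) : ℂ → ℂ :=
  Function.update (fun s : ℂ => ((s - 1) * riemannZeta s) ^ k) 1 1

/-- `lam k j` is the Taylor coefficient `λ_{j,k}`, i.e. the `j`-th derivative at `s = 1` of the
analytic extension of `(s-1)^k ζ(s)^k`; these numbers are real, and we record their real part. -/
noncomputable def lam (k j : ℕ) : ℝ :=
  (iteratedDeriv j (zetaPowAux k) 1).re

/-- The Fourier coefficients `ℓ_{n,k}` for `n ≥ -k` (an integer index). -/
noncomputable def ell (k : ℕ) (n : ℤ) : ℝ :=
  if 1 ≤ n then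
    (-1 : ℝ) ^ n.toNat *
      ∑ j ∈ Finset.Icc 1 n.toNat,
        ((n.toNat - 1).choose (j - 1) : ℝ) * lam k (j + k) / (Nat.factorial (j + k))
  else
    (-1 : ℝ) ^ k *
      ∑ j ∈ Finset.range ((k + n).toNat + 1),
        ((k - j).choose (-n).toNat : ℝ) * (-1 : ℝ) ^ j * lam k j / (Nat.factorial j)

/-- The Lindelöf Hypothesis: `ζ(1/2 + it) = O(|t|^ε)` for every `ε > 0`. -/
def LindelofHypothesis : Prop :=
  ∀ ε : ℝ, 0 < ε → ∃ C : ℝ, ∀ t : ℝ, 1 ≤ |t| →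
    ‖riemannZeta (1 / 2 + t * Complex.I)‖ ≤ C * |t| ^ ε

/-- `dk k n` is the Piltz divisor function `d_k(n)`: the number of representations of `n` as an
ordered product of `k` positive integers (the `k`-th Dirichlet-convolution power of `ζ`). -/
noncomputable def dk (k n : ℕ) : ℕ := (ArithmeticFunction.zeta ^ k) n

/-- The coefficients `a_{j,k}` of the polynomial `P_k`. -/
noncomputable def aCoef (k j : ℕ) : ℝ :=
  (-1 : ℝ) ^ (k - 1 - j) *
    ∑ i ∈ Finset.range (k - 1 - j + 1), (-1 : ℝ) ^ i * lam k i / (Nat.factorial i)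

/-- The error term `Δ_k(x) = (Σ_{1 ≤ n ≤ x} d_k(n)) - x P_k(log x)` in the Piltz divisor
problem. -/
noncomputable def Deltak (k : ℕ) (x : ℝ) : ℝ :=
  (∑ n ∈ Finset.Icc 1 ⌊x⌋₊, (dk k n : ℝ)) -
    x * ∑ j ∈ Finset.range k, aCoef k j / (Nat.factorial j) * (Real.log x) ^ j

/-- The `n`-th Laguerre polynomial. -/
noncomputable def laguerre (n : ℕ) (u : ℝ) : ℝ :=
  ∑ j ∈ Finset.range (n + 1), (n.choose j : ℝ) * (-1 : ℝ) ^ j * u ^ j / (Nat.factorial j)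

/-- The Bessel function of the first kind of order `0`. -/
noncomputable def besselJ0 (u : ℝ) : ℝ :=
  ∑' m : ℕ, (-1 : ℝ) ^ m * (u / 2) ^ (2 * m) / ((Nat.factorial m : ℝ) ^ 2)

/-- `φ_k(x) = ∫_1^∞ Δ_k(r) J₀(2 √(x log r)) r⁻² dr`. -/
noncomputable def phik (k : ℕ) (x : ℝ) : ℝ :=
  ∫ r in Set.Ioi (1 : ℝ), Deltak k r * besselJ0 (2 * Real.sqrt (x * Real.log r)) / r ^ 2

/-! Write `c n = (-1) ^ n * ell k n` and `g v = Deltak k (exp v)`. Expanding `ζ ^ k` at `1` and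
writing it as a Mellin transform of the summatory function of `d_k` give, for large `t`,
`∑ n, c n * (1 - 1 / t) ^ n = t * ∫ v > 0, g v * exp (-t * v)`,
the expectation of `g` under the exponential law of rate `t`.

Expand that law around a rate `s` into Gamma laws of rate `s` and integer shape. Since
`laguerre n u` is the binomial transform of `(-u) ^ j / j!`, transposing the binomial transform once
on each side turns the Abel mean of `c n * laguerre n u` at `ρ = 1 - 1 / s` into the expectation of
`g` under a mixture of these Gamma laws with Poisson weights of mean `(s - 1) * u`. The moment
generating function of the mixture tends to `exp (β * u)` at every `β`, so the mixture concentrates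
at `u` as `s → ∞`. For `u = log x` this gives `Deltak k x` wherever `Deltak k` is continuous, which
is at every non-integral `x`. -/

section BinomialTransform

open scoped Nat

/-- The binomial transform `n ↦ ∑_{j ≤ n} C(n, j) β_j` of a real sequence. -/
noncomputable def binomialTransform (β : ℕ → ℝ) (n : ℕ) : ℝ :=
  ∑ j ∈ range (n + 1), (n.choose j : ℝ) * β j

/-- The transpose `j ↦ ∑_{n ≥ j} C(n, j) α_n` of the binomial transform; the terms with `n < j`
of the series vanish because `Nat.choose n j = 0` there. -/
noncomputable def binomialTranspose (α : ℕ → ℝ) (j : ℕ) : ℝ :=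
  ∑' n, (n.choose j : ℝ) * α n

lemma hasSum_binomialTransform (β : ℕ → ℝ) (n : ℕ) :
    HasSum (fun j => (n.choose j : ℝ) * β j) (binomialTransform β n) :=
  hasSum_sum_of_ne_finset_zero fun j hj => by
    rw [Nat.choose_eq_zero_of_lt (by simpa using hj), Nat.cast_zero, zero_mul]

lemma binomialTransform_pow (q : ℝ) (n : ℕ) :
    binomialTransform (fun j => q ^ j) n = (1 + q) ^ n := by
  rw [add_comm, add_pow]
  exact sum_congr rfl fun j _ => by ring

lemma binomialTransform_neg_pow_div_factorial (u : ℝ) (n : ℕ) :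
    binomialTransform (fun j => (-u) ^ j / j !) n = laguerre n u := by
  refine sum_congr rfl fun j _ => ?_
  rw [neg_pow]
  ring

lemma abs_binomialTransform_le {β : ℕ → ℝ} {C q : ℝ} (hβ : ∀ j, |β j| ≤ C * q ^ j) (n : ℕ) :
    |binomialTransform β n| ≤ C * (1 + q) ^ n := by
  rw [← binomialTransform_pow, binomialTransform, binomialTransform, mul_sum]
  refine (abs_sum_le_sum_abs _ _).trans (sum_le_sum fun j _ => ?_)
  rw [abs_mul, Nat.abs_cast, mul_left_comm]
  exact mul_le_mul_of_nonneg_left (hβ j) (Nat.cast_nonneg _)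

lemma summable_mul_binomialTransform {α β : ℕ → ℝ} {C q : ℝ}
    (hα : Summable fun n => |α n| * (1 + q) ^ n) (hβ : ∀ j, |β j| ≤ C * q ^ j) :
    Summable fun n => α n * binomialTransform β n := by
  refine Summable.of_norm_bounded (hα.mul_left C) fun n => ?_
  rw [norm_mul, mul_left_comm]
  exact mul_le_mul_of_nonneg_left (abs_binomialTransform_le hβ n) (norm_nonneg _)

lemma summable_choose_mul_mul {α β : ℕ → ℝ} {C q : ℝ} (hq : 0 ≤ q)
    (hα : Summable fun n => |α n| * (1 + q) ^ n) (hβ : ∀ j, |β j| ≤ C * q ^ j) :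
    Summable fun p : ℕ × ℕ => (p.1.choose p.2 : ℝ) * (α p.1 * β p.2) := by
  have hrow (n : ℕ) : HasSum (fun j => (n.choose j : ℝ) * (|α n| * q ^ j))
      (|α n| * (1 + q) ^ n) := by
    rw [← binomialTransform_pow]
    exact ((hasSum_binomialTransform _ n).mul_left |α n|).congr_fun fun j => by ring
  have hdom : Summable fun p : ℕ × ℕ => (p.1.choose p.2 : ℝ) * (|α p.1| * q ^ p.2) := by
    refine (summable_prod_of_nonneg fun p => by positivity).2 ⟨fun n => (hrow n).summable, ?_⟩
    simpa only [(hrow _).tsum_eq] using hα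
  refine Summable.of_norm_bounded (hdom.mul_left C) fun p => ?_
  rw [norm_mul, norm_mul, Real.norm_natCast, Real.norm_eq_abs, Real.norm_eq_abs]
  calc (p.1.choose p.2 : ℝ) * (|α p.1| * |β p.2|)
      ≤ (p.1.choose p.2 : ℝ) * (|α p.1| * (C * q ^ p.2)) := by gcongr; exact hβ p.2
    _ = C * ((p.1.choose p.2 : ℝ) * (|α p.1| * q ^ p.2)) := by ring

lemma hasSum_mul_binomialTranspose {α β : ℕ → ℝ} {C q : ℝ} (hq : 0 ≤ q)
    (hα : Summable fun n => |α n| * (1 + q) ^ n) (hβ : ∀ j, |β j| ≤ C * q ^ j) :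
    HasSum (fun j => β j * binomialTranspose α j) (∑' n, α n * binomialTransform β n) := by
  have hs := summable_choose_mul_mul hq hα hβ
  have hrow (n : ℕ) : ∑' j, (n.choose j : ℝ) * (α n * β j) = α n * binomialTransform β n := by
    rw [← ((hasSum_binomialTransform β n).mul_left (α n)).tsum_eq]
    exact tsum_congr fun j => by ring
  have hcol (j : ℕ) : ∑' n, (n.choose j : ℝ) * (α n * β j) = β j * binomialTranspose α j := by
    rw [binomialTranspose, ← tsum_mul_left]
    exact tsum_congr fun n => by ring
  simp only [← hrow, ← hcol]
  rw [← Summable.tsum_comm hs]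
  exact hs.prod_symm.prod.hasSum

lemma hasSum_choose_mul_of_add {α : ℕ → ℝ} {j : ℕ} {a : ℝ}
    (h : HasSum (fun i => ((i + j).choose j : ℝ) * α (i + j)) a) :
    HasSum (fun n => (n.choose j : ℝ) * α n) a := by
  refine (hasSum_nat_add_iff' (f := fun n => (n.choose j : ℝ) * α n) j).1 ?_
  rwa [sum_eq_zero, sub_zero]
  intro n hn
  rw [Nat.choose_eq_zero_of_lt (mem_range.1 hn), Nat.cast_zero, zero_mul]

lemma binomialTranspose_pow {t : ℝ} (ht : |t| < 1) (j : ℕ) :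
    binomialTranspose (fun n => t ^ n) j = t ^ j / (1 - t) ^ (j + 1) := by
  refine (hasSum_choose_mul_of_add ?_).tsum_eq
  rw [div_eq_mul_one_div]
  exact ((hasSum_choose_mul_geometric_of_norm_lt_one j ht).mul_left (t ^ j)).congr_fun
    fun i => by ring

lemma binomialTranspose_pow_div_factorial (x : ℝ) (j : ℕ) :
    binomialTranspose (fun n => x ^ n / n !) j = x ^ j / j ! * Real.exp x := by
  refine (hasSum_choose_mul_of_add ?_).tsum_eq
  have hexp : HasSum (fun i => x ^ i / i !) (Real.exp x) := by
    rw [Real.exp_eq_exp_ℝ]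
    exact NormedSpace.expSeries_div_hasSum_exp x
  refine (hexp.mul_left (x ^ j / j !)).congr_fun fun i => ?_
  have hfac : ((i + j).choose j : ℝ) * i ! * j ! = (i + j)! := by
    exact_mod_cast Nat.add_choose_mul_factorial_mul_factorial i j
  rw [← hfac, pow_add]
  have : ((i + j).choose j : ℝ) ≠ 0 := by
    exact_mod_cast (Nat.choose_pos (Nat.le_add_left j i)).ne'
  field_simp

end BinomialTransform

section Laguerre

open scoped Nat

lemma abs_neg_pow_div_factorial_le (u : ℝ) {q : ℝ} (hq : 0 < q) (j : ℕ) :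
    |(-u) ^ j / j !| ≤ Real.exp (|u| / q) * q ^ j := by
  have h := Real.pow_div_factorial_le_exp (|u| / q) (by positivity) j
  calc |(-u) ^ j / j !| = (|u| / q) ^ j / j ! * q ^ j := by
        rw [abs_div, abs_pow, abs_neg, Nat.abs_cast, div_pow]
        field_simp
    _ ≤ Real.exp (|u| / q) * q ^ j := by gcongr

variable {c : ℕ → ℝ} {ρ : ℝ}

lemma summable_abs_mul_pow_mul_pow (hc : ∀ r ∈ Set.Ico (0 : ℝ) 1, Summable fun n => |c n| * r ^ n)
    (hρ : ρ ∈ Set.Ico (0 : ℝ) 1) :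
    Summable fun n => |c n * ρ ^ n| * (1 + (1 - ρ)) ^ n := by
  have hr : ρ * (1 + (1 - ρ)) ∈ Set.Ico (0 : ℝ) 1 :=
    ⟨mul_nonneg hρ.1 (by linarith [hρ.2]), by nlinarith [hρ.2]⟩
  refine (hc _ hr).congr fun n => ?_
  rw [abs_mul, abs_of_nonneg (pow_nonneg hρ.1 n), mul_pow, mul_assoc]

lemma summable_abs_mul_laguerre_mul_pow
    (hc : ∀ r ∈ Set.Ico (0 : ℝ) 1, Summable fun n => |c n| * r ^ n)
    (hρ : ρ ∈ Set.Ico (0 : ℝ) 1) (u : ℝ) :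
    Summable fun n => |c n * laguerre n u * ρ ^ n| := by
  have h := summable_mul_binomialTransform (summable_abs_mul_pow_mul_pow hc hρ)
    (abs_neg_pow_div_factorial_le u (sub_pos.2 hρ.2))
  refine h.abs.congr fun n => ?_
  rw [binomialTransform_neg_pow_div_factorial, mul_right_comm]

end Laguerre

section PowerSeriesDuality

open scoped Nat

lemma eq_of_eventually_hasSum_pow {a b : ℕ → ℝ} {f : ℝ → ℝ}
    (ha : ∀ᶠ h in 𝓝 (0 : ℝ), HasSum (fun j => h ^ j * a j) (f h))
    (hb : ∀ᶠ h in 𝓝 (0 : ℝ), HasSum (fun j => h ^ j * b j) (f h)) : a = b := by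
  have hpow {a : ℕ → ℝ} (ha : ∀ᶠ h in 𝓝 (0 : ℝ), HasSum (fun j => h ^ j * a j) (f h)) :
      HasFPowerSeriesAt f (FormalMultilinearSeries.ofScalars ℝ a) 0 := by
    rw [hasFPowerSeriesAt_iff]
    simpa only [FormalMultilinearSeries.coeff_ofScalars, smul_eq_mul, zero_add] using ha
  funext n
  simpa only [FormalMultilinearSeries.coeff_ofScalars] using
    congrArg (fun p => FormalMultilinearSeries.coeff p n)
      ((hpow ha).eq_formalMultilinearSeries (hpow hb))

variable {α β : ℕ → ℝ} {C q δ κ : ℝ}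

lemma hasSum_pow_mul_binomialTranspose (hα : Summable fun n => |α n| * (1 + δ) ^ n) {h : ℝ}
    (hh : |h| ≤ δ) :
    HasSum (fun j => h ^ j * binomialTranspose α j) (∑' n, α n * (1 + h) ^ n) := by
  simp only [← binomialTransform_pow]
  refine hasSum_mul_binomialTranspose (abs_nonneg h) (C := 1) ?_ fun j => by rw [abs_pow, one_mul]
  refine hα.of_nonneg_of_le (fun n => by positivity) fun n => ?_
  gcongr

lemma hasSum_mul_pow_div_one_sub_pow (hq : 0 ≤ q) (hβ : ∀ j, |β j| ≤ C * q ^ j) {x : ℝ}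
    (hx : |x| * (1 + q) < 1) :
    HasSum (fun j => β j * (x ^ j / (1 - x) ^ (j + 1))) (∑' n, x ^ n * binomialTransform β n) := by
  have hx1 : |x| < 1 := by nlinarith [mul_nonneg (abs_nonneg x) hq]
  simp only [← binomialTranspose_pow hx1]
  refine hasSum_mul_binomialTranspose hq ?_ hβ
  refine (summable_geometric_of_lt_one (by positivity) hx).congr fun n => ?_
  rw [mul_pow, abs_pow]

lemma hasSum_pow_mul_binomialTransform (hq : 0 ≤ q) (hβ : ∀ j, |β j| ≤ C * q ^ j) {x : ℝ}
    (hx : |x| * (1 + q) < 1) :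
    HasSum (fun n => x ^ n * binomialTransform β n)
      (∑' j, β j * (x ^ j / (1 - x) ^ (j + 1))) := by
  rw [(hasSum_mul_pow_div_one_sub_pow hq hβ hx).tsum_eq]
  refine (summable_mul_binomialTransform ?_ hβ).hasSum
  refine (summable_geometric_of_lt_one (by positivity) hx).congr fun n => ?_
  rw [mul_pow, abs_pow]

lemma binomialTranspose_eq_pow_mul_binomialTransform (hδ : 0 < δ) (hq : 0 ≤ q)
    (hα : Summable fun n => |α n| * (1 + δ) ^ n) (hβ : ∀ j, |β j| ≤ C * q ^ j)
    (hαβ : ∀ᶠ h in 𝓝 (0 : ℝ), ∑' n, α n * (1 + h) ^ n =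
      ∑' j, β j * ((κ * h) ^ j / (1 - κ * h) ^ (j + 1))) (j : ℕ) :
    binomialTranspose α j = κ ^ j * binomialTransform β j := by
  refine congrFun (f := binomialTranspose α) (g := fun j => κ ^ j * binomialTransform β j)
    (eq_of_eventually_hasSum_pow (f := fun h => ∑' n, α n * (1 + h) ^ n) ?_ ?_) j
  · have hsmall : ∀ᶠ h in 𝓝 (0 : ℝ), |h| ≤ δ :=
      (continuous_abs.tendsto' 0 0 abs_zero).eventually_le_const hδ
    filter_upwards [hsmall] with h hh using hasSum_pow_mul_binomialTranspose hα hh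
  · have hsmall : ∀ᶠ h in 𝓝 (0 : ℝ), |κ * h| * (1 + q) < 1 :=
      (Continuous.tendsto' (by fun_prop) 0 0 (by simp)).eventually_lt_const one_pos
    filter_upwards [hαβ, hsmall] with h heq hh
    rw [heq]
    exact (hasSum_pow_mul_binomialTransform hq hβ hh).congr_fun fun j => by rw [mul_pow]; ring

/-- Transposing twice: `(-u)^j / j!` against the left side, `(-κu)^n / n!` against the right. -/
lemma hasSum_poisson_mul (hδ : 0 < δ) (hq : 0 ≤ q)
    (hα : Summable fun n => |α n| * (1 + δ) ^ n) (hβ : ∀ j, |β j| ≤ C * q ^ j)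
    (hαβ : ∀ᶠ h in 𝓝 (0 : ℝ), ∑' n, α n * (1 + h) ^ n =
      ∑' j, β j * ((κ * h) ^ j / (1 - κ * h) ^ (j + 1))) (u : ℝ) :
    HasSum (fun m => (-(κ * u)) ^ m / m ! * Real.exp (-(κ * u)) * β m)
      (∑' n, α n * laguerre n u) := by
  have hleft := hasSum_mul_binomialTranspose hδ.le hα (abs_neg_pow_div_factorial_le u hδ)
  have hexp : Summable fun n => |(-(κ * u)) ^ n / n !| * (1 + q) ^ n := by
    refine (Real.summable_pow_div_factorial (|κ * u| * (1 + q))).congr fun n => ?_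
    rw [abs_div, abs_pow, abs_neg, Nat.abs_cast, mul_pow]
    ring
  have hright := hasSum_mul_binomialTranspose hq hexp hβ
  simp only [binomialTransform_neg_pow_div_factorial,
    binomialTranspose_eq_pow_mul_binomialTransform hδ hq hα hβ hαβ] at hleft
  simp only [binomialTranspose_pow_div_factorial] at hright
  rw [← hleft.tsum_eq, tsum_congr fun j => (?_ : _ = (-(κ * u)) ^ j / j ! * binomialTransform β j)]
  · exact hright.congr_fun fun m => mul_comm _ _
  · rw [neg_mul_eq_mul_neg, mul_pow]
    ring

end PowerSeriesDuality

section GammaLaw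

open ProbabilityTheory

open scoped Nat

variable {a r s t C α β : ℝ} {g : ℝ → ℝ}

lemma measurable_gammaPDF (a r : ℝ) : Measurable (gammaPDF a r) :=
  (measurable_gammaPDFReal a r).ennreal_ofReal

lemma toReal_gammaPDF (ha : 0 < a) (hr : 0 < r) (v : ℝ) :
    (gammaPDF a r v).toReal = gammaPDFReal a r v :=
  ENNReal.toReal_ofReal (gammaPDFReal_nonneg ha hr v)

lemma ae_gammaMeasure_pos (a r : ℝ) : ∀ᵐ v ∂gammaMeasure a r, 0 < v := by
  rw [gammaMeasure, ae_withDensity_iff (measurable_gammaPDF a r)]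
  filter_upwards [Measure.ae_ne volume (0 : ℝ)] with v hv0 hv
  exact (not_lt.1 fun hneg => hv (gammaPDF_of_neg hneg)).lt_of_ne' hv0

lemma integrable_gammaMeasure_iff (ha : 0 < a) (hr : 0 < r) :
    Integrable g (gammaMeasure a r) ↔ Integrable fun v => gammaPDFReal a r v * g v := by
  rw [gammaMeasure, integrable_withDensity_iff_integrable_smul' (measurable_gammaPDF a r)
    (Eventually.of_forall fun _ => ENNReal.ofReal_lt_top)]
  simp only [toReal_gammaPDF ha hr, smul_eq_mul]

lemma integral_gammaMeasure (ha : 0 < a) (hr : 0 < r) (g : ℝ → ℝ) :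
    ∫ v, g v ∂gammaMeasure a r = ∫ v, gammaPDFReal a r v * g v := by
  rw [gammaMeasure, integral_withDensity_eq_integral_toReal_smul (measurable_gammaPDF a r)
    (Eventually.of_forall fun _ => ENNReal.ofReal_lt_top)]
  simp only [toReal_gammaPDF ha hr, smul_eq_mul]

lemma gammaPDFReal_mul_exp (hr : 0 < r) (hβ : β < r) (v : ℝ) :
    gammaPDFReal a r v * Real.exp (β * v) = (r / (r - β)) ^ a * gammaPDFReal a (r - β) v := by
  have hrβ : 0 < r - β := sub_pos.2 hβ
  have hexp : Real.exp (-(r * v)) * Real.exp (β * v) = Real.exp (-((r - β) * v)) := by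
    rw [← Real.exp_add]
    ring_nf
  have hpow : (r / (r - β)) ^ a * (r - β) ^ a = r ^ a := by
    rw [← Real.mul_rpow (by positivity) hrβ.le, div_mul_cancel₀ _ hrβ.ne']
  rw [gammaPDFReal, gammaPDFReal]
  split_ifs
  · rw [mul_assoc, hexp, ← hpow]
    ring
  · rw [zero_mul, mul_zero]

lemma integrable_exp_mul_gammaMeasure (ha : 0 < a) (hr : 0 < r) (hβ : β < r) :
    Integrable (fun v => Real.exp (β * v)) (gammaMeasure a r) := by
  have hrβ : 0 < r - β := sub_pos.2 hβ
  have := isProbabilityMeasure_gammaMeasure ha hrβ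
  have hpdf := (integrable_gammaMeasure_iff ha hrβ).1 (integrable_const 1)
  rw [integrable_gammaMeasure_iff ha hr]
  simp only [gammaPDFReal_mul_exp hr hβ]
  simpa only [mul_one] using hpdf.const_mul _

lemma mgf_gammaMeasure (ha : 0 < a) (hr : 0 < r) (hβ : β < r) :
    mgf id (gammaMeasure a r) β = (r / (r - β)) ^ a := by
  have hrβ : 0 < r - β := sub_pos.2 hβ
  have := isProbabilityMeasure_gammaMeasure ha hrβ
  have hpdf : ∫ v, gammaPDFReal a (r - β) v = 1 := by
    simpa only [mul_one, integral_const, probReal_univ, smul_eq_mul] using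
      (integral_gammaMeasure ha hrβ fun _ => 1).symm
  rw [mgf, integral_gammaMeasure ha hr]
  simp only [id_eq, gammaPDFReal_mul_exp hr hβ]
  rw [integral_const_mul, hpdf, mul_one]

lemma mgf_gammaMeasure_natCast_add_one (hs : 0 < s) (hβ : β < s) (m : ℕ) :
    mgf id (gammaMeasure (m + 1) s) β = (s / (s - β)) ^ (m + 1) := by
  rw [mgf_gammaMeasure (by positivity) hs hβ]
  exact_mod_cast Real.rpow_natCast (s / (s - β)) (m + 1)

lemma gammaPDFReal_natCast_add_one (m : ℕ) {v : ℝ} (hv : 0 ≤ v) :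
    gammaPDFReal (m + 1) s v = s * ((s * v) ^ m / m ! * Real.exp (-(s * v))) := by
  have hpow : s ^ ((m : ℝ) + 1) = s ^ (m + 1) := by exact_mod_cast Real.rpow_natCast s (m + 1)
  rw [gammaPDFReal, if_pos hv, Real.Gamma_nat_eq_factorial, add_sub_cancel_right,
    Real.rpow_natCast, hpow, mul_pow, pow_succ]
  ring

lemma gammaPDFReal_one {v : ℝ} (hv : 0 ≤ v) : gammaPDFReal 1 t v = t * Real.exp (-(t * v)) := by
  simpa using gammaPDFReal_natCast_add_one (s := t) 0 hv

lemma integral_gammaMeasure_one (ht : 0 < t) (g : ℝ → ℝ) :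
    ∫ v, g v ∂gammaMeasure 1 t = t * ∫ v in Set.Ioi 0, g v * Real.exp (-(t * v)) := by
  have hind (v : ℝ) : gammaPDFReal 1 t v * g v =
      (Set.Ici 0).indicator (fun v => t * (g v * Real.exp (-(t * v)))) v := by
    by_cases hv : 0 ≤ v
    · rw [Set.indicator_of_mem (Set.mem_Ici.2 hv), gammaPDFReal_one hv]
      ring
    · rw [Set.indicator_of_notMem (by simpa using hv), gammaPDFReal, if_neg hv, zero_mul]
  simp only [integral_gammaMeasure one_pos ht, hind]
  rw [integral_indicator measurableSet_Ici, integral_const_mul, integral_Ici_eq_integral_Ioi]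

lemma hasSum_gammaPDFReal (hs : s ≠ 0) (t v : ℝ) :
    HasSum (fun m : ℕ => t / s * ((s - t) / s) ^ m * gammaPDFReal (m + 1) s v)
      (gammaPDFReal 1 t v) := by
  by_cases hv : 0 ≤ v
  · have hexp := (NormedSpace.expSeries_div_hasSum_exp ((s - t) * v)).mul_left
      (t * Real.exp (-(s * v)))
    rw [← Real.exp_eq_exp_ℝ, mul_assoc, ← Real.exp_add] at hexp
    rw [gammaPDFReal_one hv]
    convert! hexp using 2 with m
    · rw [gammaPDFReal_natCast_add_one m hv, div_pow, mul_pow, mul_pow]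
      field_simp
    · ring_nf
  · simp only [gammaPDFReal, if_neg hv, mul_zero]
    exact hasSum_zero

lemma integrable_gammaMeasure_of_abs_le (hg : Measurable g)
    (hgC : ∀ v, 0 < v → |g v| ≤ C * Real.exp (α * v))
    (ha : 0 < a) (hr : 0 < r) (hα : α < r) :
    Integrable g (gammaMeasure a r) :=
  ((integrable_exp_mul_gammaMeasure ha hr hα).const_mul C).mono' hg.aestronglyMeasurable
    ((ae_gammaMeasure_pos a r).mono hgC)

lemma integral_abs_gammaMeasure_le (hgC : ∀ v, 0 < v → |g v| ≤ C * Real.exp (α * v))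
    (hs : 0 < s) (hα : α < s) (m : ℕ) :
    ∫ v, |g v| ∂gammaMeasure (m + 1) s ≤ C * (s / (s - α)) ^ (m + 1) := by
  rw [← mgf_gammaMeasure_natCast_add_one hs hα, mgf, ← integral_const_mul]
  refine integral_mono_of_nonneg (Eventually.of_forall fun v => abs_nonneg _) ?_
    ((ae_gammaMeasure_pos _ _).mono hgC)
  exact (integrable_exp_mul_gammaMeasure (by positivity) hs hα).const_mul C

lemma hasSum_integral_gammaMeasure (hg : Measurable g)
    (hgC : ∀ v, 0 < v → |g v| ≤ C * Real.exp (α * v))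
    (hs : 0 < s) (ht : 0 < t) (hst : |s - t| < s - α) :
    HasSum (fun m : ℕ => t / s * ((s - t) / s) ^ m * ∫ v, g v ∂gammaMeasure (m + 1) s)
      (∫ v, g v ∂gammaMeasure 1 t) := by
  have hα : α < s := sub_pos.1 ((abs_nonneg _).trans_lt hst)
  have hm (m : ℕ) : (0 : ℝ) < m + 1 := by positivity
  let F (m : ℕ) (v : ℝ) := t / s * ((s - t) / s) ^ m * (gammaPDFReal (m + 1) s v * g v)
  have hF (m : ℕ) : Integrable (F m) :=
    ((integrable_gammaMeasure_iff (hm m) hs).1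
      (integrable_gammaMeasure_of_abs_le hg hgC (hm m) hs hα)).const_mul _
  have hnorm (m : ℕ) : ∫ v, ‖F m v‖ ≤ t * C / (s - α) * (|s - t| / (s - α)) ^ m := by
    have e (v : ℝ) : ‖F m v‖ = t / s * (|s - t| / s) ^ m * (gammaPDFReal (m + 1) s v * |g v|) := by
      simp [F, abs_of_pos hs, abs_of_pos ht, abs_of_nonneg (gammaPDFReal_nonneg (hm m) hs v)]
    simp only [e, integral_const_mul, ← integral_gammaMeasure (hm m) hs]
    calc t / s * (|s - t| / s) ^ m * ∫ v, |g v| ∂gammaMeasure (m + 1) s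
        ≤ t / s * (|s - t| / s) ^ m * (C * (s / (s - α)) ^ (m + 1)) := by
          gcongr
          exact integral_abs_gammaMeasure_le hgC hs hα m
      _ = t * C / (s - α) * (|s - t| / (s - α)) ^ m := by
          have := (sub_pos.2 hα).ne'
          simp only [div_pow, pow_succ]
          field_simp
  have hsum := hasSum_integral_of_summable_integral_norm hF <|
    Summable.of_nonneg_of_le (fun m => integral_nonneg fun v => norm_nonneg _) hnorm <|
      (summable_geometric_of_lt_one (by positivity)
        ((div_lt_one (sub_pos.2 hα)).2 hst)).mul_left _
  convert! hsum using 1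
  · funext m
    rw [integral_const_mul, integral_gammaMeasure (hm m) hs]
  · rw [integral_gammaMeasure one_pos ht]
    refine integral_congr_ae (Eventually.of_forall fun v => ?_)
    exact (((hasSum_gammaPDFReal hs.ne' t v).mul_right (g v)).congr_fun
      fun m => by ring).tsum_eq.symm

end GammaLaw

section ExponentialLaw

open ProbabilityTheory

variable {t : ℝ}

lemma integral_comp_exp_gammaMeasure_one (ht : 0 < t) (F : ℝ → ℝ) :
    ∫ v, F (Real.exp v) ∂gammaMeasure 1 t =
      t * ∫ x in Set.Ioi (1 : ℝ), F x * x ^ (-t - 1) := by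
  have hsubst := integral_comp_exp_Ioi (fun x => F x * x ^ (-t - 1)) 0
  rw [Real.exp_zero] at hsubst
  rw [integral_gammaMeasure_one ht, ← hsubst]
  congr 1
  refine integral_congr_ae (Eventually.of_forall fun v => ?_)
  simp only [smul_eq_mul]
  rw [mul_left_comm, ← Real.exp_mul, ← Real.exp_add]
  ring_nf

lemma integral_exp_mul_pow_gammaMeasure_one (ht : 1 < t) (j : ℕ) :
    ∫ v, Real.exp v * v ^ j ∂gammaMeasure 1 t = t * (j.factorial / (t - 1) ^ (j + 1)) := by
  have hGamma := Real.integral_rpow_mul_exp_neg_mul_Ioi (a := j + 1) (r := t - 1)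
    (by positivity) (sub_pos.2 ht)
  rw [Real.Gamma_nat_eq_factorial, add_sub_cancel_right] at hGamma
  rw [integral_gammaMeasure_one (one_pos.trans ht)]
  congr 1
  calc ∫ v in Set.Ioi 0, Real.exp v * v ^ j * Real.exp (-(t * v))
      = ∫ v in Set.Ioi (0 : ℝ), v ^ (j : ℝ) * Real.exp (-((t - 1) * v)) := by
        refine integral_congr_ae (Eventually.of_forall fun v => ?_)
        simp only [Real.rpow_natCast]
        rw [mul_right_comm, ← Real.exp_add, mul_comm]
        ring_nf
    _ = j.factorial / (t - 1) ^ (j + 1) := by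
        rw [hGamma, ← Nat.cast_add_one, Real.rpow_natCast, one_div, inv_pow, inv_mul_eq_div]

lemma integrable_exp_mul_pow_gammaMeasure_one (ht : 2 < t) (j : ℕ) :
    Integrable (fun v => Real.exp v * v ^ j) (gammaMeasure 1 t) := by
  refine integrable_gammaMeasure_of_abs_le (C := j.factorial) (α := 2) (by fun_prop)
    (fun v hv => ?_) one_pos (two_pos.trans ht) ht
  have hpow := (div_le_iff₀' (by positivity)).1 (Real.pow_div_factorial_le_exp v hv.le j)
  rw [abs_of_nonneg (by positivity), two_mul, Real.exp_add, mul_left_comm]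
  gcongr

end ExponentialLaw

section PoissonGamma

open ProbabilityTheory

open scoped Nat

/-- The law of a Gamma variable of rate `s` whose shape is `m + 1` with `m` drawn from the Poisson
law of mean `r`. As a sum of measures over `m` it needs no measurability of the Gamma family. -/
noncomputable def poissonGammaMeasure (r s : ℝ) : Measure ℝ :=
  Measure.sum fun m : ℕ => ENNReal.ofReal (r ^ m / m ! * Real.exp (-r)) • gammaMeasure (m + 1) s

variable {r s α β C : ℝ} {g : ℝ → ℝ}

lemma ae_poissonGammaMeasure_pos (r s : ℝ) : ∀ᵐ v ∂poissonGammaMeasure r s, 0 < v :=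
  Measure.ae_sum_iff.2 fun _ => Measure.ae_smul_measure (ae_gammaMeasure_pos _ _) _

lemma hasSum_integral_poissonGammaMeasure (hr : 0 ≤ r) (hs : 0 < s) (hα : α < s)
    (hg : Measurable g) (hgC : ∀ v, 0 < v → |g v| ≤ C * Real.exp (α * v)) :
    HasSum (fun m : ℕ => r ^ m / m ! * Real.exp (-r) * ∫ v, g v ∂gammaMeasure (m + 1) s)
      (∫ v, g v ∂poissonGammaMeasure r s) := by
  have hw (m : ℕ) : (ENNReal.ofReal (r ^ m / m ! * Real.exp (-r))).toReal =
      r ^ m / m ! * Real.exp (-r) := ENNReal.toReal_ofReal (by positivity)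
  have hint : Integrable g (poissonGammaMeasure r s) := by
    refine integrable_sum_measure (fun m => ?_) ?_
    · exact (integrable_gammaMeasure_of_abs_le hg hgC (by positivity) hs hα).smul_measure
        ENNReal.ofReal_ne_top
    · simp only [integral_smul_measure, hw, smul_eq_mul, Real.norm_eq_abs]
      refine Summable.of_nonneg_of_le (fun m => by positivity) (fun m => ?_)
        ((Real.summable_pow_div_factorial (r * (s / (s - α)))).mul_left
          (Real.exp (-r) * C * (s / (s - α))))
      calc r ^ m / m ! * Real.exp (-r) * ∫ v, |g v| ∂gammaMeasure (m + 1) s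
          ≤ r ^ m / m ! * Real.exp (-r) * (C * (s / (s - α)) ^ (m + 1)) := by
            gcongr
            exact integral_abs_gammaMeasure_le hgC hs hα m
        _ = Real.exp (-r) * C * (s / (s - α)) * ((r * (s / (s - α))) ^ m / m !) := by
            rw [mul_pow, pow_succ]
            ring
  have hsum := hasSum_integral_measure hint
  simp only [integral_smul_measure, hw, smul_eq_mul] at hsum
  exact hsum

lemma mgf_poissonGammaMeasure (hr : 0 ≤ r) (hs : 0 < s) (hβ : β < s) :
    mgf id (poissonGammaMeasure r s) β =
      s / (s - β) * Real.exp (r * (s / (s - β) - 1)) := by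
  have hsum := hasSum_integral_poissonGammaMeasure hr hs hβ
    (g := fun v => Real.exp (β * v)) (C := 1) (by fun_prop)
    fun v _ => by rw [Real.abs_exp, one_mul]
  have hexp := (NormedSpace.expSeries_div_hasSum_exp (r * (s / (s - β)))).mul_left
    (s / (s - β) * Real.exp (-r))
  rw [← Real.exp_eq_exp_ℝ, mul_assoc, ← Real.exp_add] at hexp
  rw [mul_sub_one, sub_eq_neg_add (r * _)]
  refine hsum.unique (hexp.congr_fun fun m => ?_)
  have hmgf := mgf_gammaMeasure_natCast_add_one hs hβ m
  simp only [mgf, id_eq] at hmgf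
  rw [hmgf, mul_pow, pow_succ]
  ring

lemma tendsto_mgf_poissonGammaMeasure {u : ℝ} (hu : 0 ≤ u) (β : ℝ) :
    Tendsto (fun s => mgf id (poissonGammaMeasure ((s - 1) * u) s) β) atTop
      (𝓝 (Real.exp (β * u))) := by
  have hinv : Tendsto (fun s : ℝ => (s - β)⁻¹) atTop (𝓝 0) :=
    (tendsto_atTop_add_const_right _ _ tendsto_id).inv_tendsto_atTop
  have hq : Tendsto (fun s : ℝ => 1 + β * (s - β)⁻¹) atTop (𝓝 1) := by
    simpa using (hinv.const_mul β).const_add 1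
  have hlim : Tendsto (fun s : ℝ => (1 + β * (s - β)⁻¹) *
      Real.exp (u * β * (1 + (β - 1) * (s - β)⁻¹))) atTop (𝓝 (1 * Real.exp (u * β))) := by
    refine hq.mul ((Real.continuous_exp.tendsto _).comp ?_)
    simpa using ((hinv.const_mul (β - 1)).const_add 1).const_mul (u * β)
  rw [one_mul, mul_comm u] at hlim
  refine hlim.congr' ?_
  filter_upwards [eventually_gt_atTop β, eventually_ge_atTop 1] with s hβ hs
  have hne : s - β ≠ 0 := (sub_pos.2 hβ).ne'
  rw [mgf_poissonGammaMeasure (mul_nonneg (sub_nonneg.2 hs) hu) (by linarith) hβ]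
  congr 2 <;> field_simp <;> ring

end PoissonGamma

section Concentration

open ProbabilityTheory

variable {ι : Type*} {l : Filter ι} {ν : ι → Measure ℝ} {u : ℝ}

lemma eventually_integrable_exp_mul
    (hν : ∀ β, Tendsto (fun i => mgf id (ν i) β) l (𝓝 (Real.exp (β * u)))) (β : ℝ) :
    ∀ᶠ i in l, Integrable (fun v => Real.exp (β * v)) (ν i) := by
  filter_upwards [(hν β).eventually_ne (Real.exp_ne_zero _)] with i hi
  by_contra hint
  exact hi (mgf_undef hint)

lemma exp_mul_cosh_sub_one (u α v : ℝ) :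
    Real.exp (α * v) * (Real.cosh (v - u) - 1) =
      Real.exp (-u) / 2 * Real.exp ((α + 1) * v) + Real.exp u / 2 * Real.exp ((α - 1) * v) -
        Real.exp (α * v) := by
  rw [Real.cosh_eq, add_mul, sub_mul, one_mul, Real.exp_add, sub_eq_add_neg v, Real.exp_add,
    neg_add, Real.exp_add, neg_neg, sub_eq_add_neg (α * v), Real.exp_add]
  ring

lemma eventually_integrable_exp_mul_cosh
    (hν : ∀ β, Tendsto (fun i => mgf id (ν i) β) l (𝓝 (Real.exp (β * u)))) (α : ℝ) :
    ∀ᶠ i in l, Integrable (fun v => Real.exp (α * v) * (Real.cosh (v - u) - 1)) (ν i) := by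
  filter_upwards [eventually_integrable_exp_mul hν α, eventually_integrable_exp_mul hν (α + 1),
    eventually_integrable_exp_mul hν (α - 1)] with i h hadd hsub
  simp only [exp_mul_cosh_sub_one]
  exact ((hadd.const_mul _).add (hsub.const_mul _)).sub h

lemma tendsto_integral_exp_mul_cosh
    (hν : ∀ β, Tendsto (fun i => mgf id (ν i) β) l (𝓝 (Real.exp (β * u)))) (α : ℝ) :
    Tendsto (fun i => ∫ v, Real.exp (α * v) * (Real.cosh (v - u) - 1) ∂ν i) l (𝓝 0) := by
  have hlim := (((hν (α + 1)).const_mul (Real.exp (-u) / 2)).add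
    ((hν (α - 1)).const_mul (Real.exp u / 2))).sub (hν α)
  rw [← exp_mul_cosh_sub_one u α u, sub_self, Real.cosh_zero, sub_self, mul_zero] at hlim
  refine hlim.congr' ?_
  filter_upwards [eventually_integrable_exp_mul hν α, eventually_integrable_exp_mul hν (α + 1),
    eventually_integrable_exp_mul hν (α - 1)] with i h hadd hsub
  simp only [exp_mul_cosh_sub_one]
  rw [integral_sub ((hadd.const_mul _).fun_add (hsub.const_mul _)) h,
    integral_add (hadd.const_mul _) (hsub.const_mul _), integral_const_mul, integral_const_mul]
  rfl

variable {g : ℝ → ℝ} {C α : ℝ}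

/-- Away from `u` the convex function `cosh (v - u) - 1` is bounded below, so it dominates any
multiple of the growth of `g`. -/
lemma exists_abs_sub_le_add_mul_cosh (hu : ContinuousAt g u) {ε : ℝ} (hε : 0 < ε) :
    ∃ M, ∀ v, |g v| ≤ C * Real.exp (α * v) → |g v - g u| ≤ ε +
      M * (Real.exp (α * v) * (Real.cosh (v - u) - 1) +
        Real.exp (0 * v) * (Real.cosh (v - u) - 1)) := by
  obtain ⟨δ, hδ, hclose⟩ := Metric.continuousAt_iff.1 hu ε hε
  have hη : 0 < Real.cosh δ - 1 := sub_pos.2 (Real.one_lt_cosh.2 hδ.ne')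
  refine ⟨(|C| + |g u|) / (Real.cosh δ - 1), fun v hv => ?_⟩
  rw [zero_mul, Real.exp_zero, ← add_mul]
  have hcosh : 0 ≤ Real.cosh (v - u) - 1 := sub_nonneg.2 (Real.one_le_cosh _)
  rcases lt_or_ge |v - u| δ with hnear | hfar
  · have := (hclose (by rwa [Real.dist_eq])).le
    rw [Real.dist_eq] at this
    exact this.trans (le_add_of_nonneg_right (by positivity))
  · have hle : 1 ≤ (Real.cosh (v - u) - 1) / (Real.cosh δ - 1) := by
      rw [one_le_div hη]
      exact sub_le_sub_right (Real.cosh_le_cosh.2 (by rwa [abs_of_pos hδ])) 1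
    have hC : C * Real.exp (α * v) ≤ |C| * Real.exp (α * v) := by gcongr; exact le_abs_self C
    calc |g v - g u| ≤ |g v| + |g u| := abs_sub _ _
      _ ≤ (|C| + |g u|) * (Real.exp (α * v) + 1) := by
          nlinarith [abs_nonneg C, mul_nonneg (abs_nonneg (g u)) (Real.exp_pos (α * v)).le]
      _ ≤ (|C| + |g u|) * (Real.exp (α * v) + 1) *
            ((Real.cosh (v - u) - 1) / (Real.cosh δ - 1)) :=
          le_mul_of_one_le_right (by positivity) hle
      _ = (|C| + |g u|) / (Real.cosh δ - 1) *
            ((Real.exp (α * v) + 1) * (Real.cosh (v - u) - 1)) := by ring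
      _ ≤ _ := le_add_of_nonneg_left hε.le

theorem tendsto_integral_of_tendsto_mgf
    (hν : ∀ β, Tendsto (fun i => mgf id (ν i) β) l (𝓝 (Real.exp (β * u))))
    (hg : Measurable g) (hgC : ∀ᶠ i in l, ∀ᵐ v ∂ν i, |g v| ≤ C * Real.exp (α * v))
    (hu : ContinuousAt g u) :
    Tendsto (fun i => ∫ v, g v ∂ν i) l (𝓝 (g u)) := by
  have hmass : Tendsto (fun i => (ν i).real Set.univ) l (𝓝 1) := by
    simpa only [mgf_zero', zero_mul, Real.exp_zero] using hν 0
  have hfin : ∀ᶠ i in l, IsFiniteMeasure (ν i) := by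
    filter_upwards [eventually_integrable_exp_mul hν 0] with i hi
    simpa [integrable_const_iff] using hi
  have hint : ∀ᶠ i in l, Integrable g (ν i) := by
    filter_upwards [hgC, eventually_integrable_exp_mul hν α] with i hi hα
    exact (hα.const_mul C).mono' hg.aestronglyMeasurable hi
  have hdiff : Tendsto (fun i => ∫ v, (g v - g u) ∂ν i) l (𝓝 0) := by
    refine Metric.tendsto_nhds.2 fun ε hε => ?_
    obtain ⟨M, hM⟩ := exists_abs_sub_le_add_mul_cosh (C := C) (α := α) hu (half_pos hε)
    have hbound := (hmass.mul_const (ε / 2)).add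
      (((tendsto_integral_exp_mul_cosh hν α).add (tendsto_integral_exp_mul_cosh hν 0)).const_mul M)
    filter_upwards [hgC, hfin, eventually_integrable_exp_mul_cosh hν α,
      eventually_integrable_exp_mul_cosh hν 0,
      hbound.eventually_lt_const (by linarith : _ < ε)] with i hi _ hα h0 hlt
    rw [dist_zero_right]
    have hcosh := (hα.fun_add h0).const_mul M
    refine (norm_integral_le_of_norm_le ((integrable_const (ε / 2)).fun_add hcosh)
      (hi.mono hM)).trans_lt ?_
    rwa [integral_add (integrable_const _) hcosh, integral_const_mul, integral_add hα h0,
      integral_const]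
  have hlim := hdiff.add (hmass.mul_const (g u))
  rw [zero_add, one_mul] at hlim
  refine hlim.congr' ?_
  filter_upwards [hint, hfin] with i hi _
  rw [integral_sub hi (integrable_const _), integral_const, smul_eq_mul, sub_add_cancel]

end Concentration

section AbelLaguerre

open ProbabilityTheory

variable {c : ℕ → ℝ} {g : ℝ → ℝ} {s u α C : ℝ}

lemma eventually_tsum_mul_one_add_pow_eq (hs : 1 < s) (hα : α < s) (hg : Measurable g)
    (hgC : ∀ v, 0 < v → |g v| ≤ C * Real.exp (α * v))
    (hcg : ∀ᶠ t in 𝓝 s, HasSum (fun n => c n * (1 - t⁻¹) ^ n) (∫ v, g v ∂gammaMeasure 1 t)) :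
    ∀ᶠ h in 𝓝 (0 : ℝ), ∑' n, c n * (1 - s⁻¹) ^ n * (1 + h) ^ n =
      ∑' m : ℕ, (-1) ^ m * (∫ v, g v ∂gammaMeasure (m + 1) s) *
        (((s - 1) * h) ^ m / (1 - (s - 1) * h) ^ (m + 1)) := by
  have hs0 : 0 < s := one_pos.trans hs
  have hden : Tendsto (fun h : ℝ => 1 - (s - 1) * h) (𝓝 0) (𝓝 1) :=
    Continuous.tendsto' (by fun_prop) _ _ (by simp)
  have ht : Tendsto (fun h : ℝ => s / (1 - (s - 1) * h)) (𝓝 0) (𝓝 s) := by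
    simpa only [div_one, Pi.div_def] using (tendsto_const_nhds (x := s)).div hden one_ne_zero
  have hst : Tendsto (fun h : ℝ => |s - s / (1 - (s - 1) * h)|) (𝓝 0) (𝓝 0) := by
    simpa only [sub_self, abs_zero] using (ht.const_sub s).abs
  filter_upwards [hden.eventually_const_lt one_pos, ht.eventually hcg,
    hst.eventually_lt_const (sub_pos.2 hα)] with h hd hcgt hlt
  have harg : (1 - s⁻¹) * (1 + h) = 1 - (s / (1 - (s - 1) * h))⁻¹ := by
    field_simp
    ring
  simp only [mul_assoc (c _), ← mul_pow, harg]
  rw [hcgt.tsum_eq, ← (hasSum_integral_gammaMeasure hg hgC hs0 (div_pos hs0 hd) hlt).tsum_eq]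
  refine tsum_congr fun m => ?_
  have hratio : (s - s / (1 - (s - 1) * h)) / s = -((s - 1) * h) / (1 - (s - 1) * h) := by
    field_simp
    ring
  rw [hratio, div_pow, neg_pow ((s - 1) * h), pow_succ (1 - (s - 1) * h)]
  field_simp

theorem tsum_mul_laguerre_mul_pow_eq_integral (hs : 1 < s) (hα : α < s) (hu : 0 ≤ u)
    (hc : ∀ r ∈ Set.Ico (0 : ℝ) 1, Summable fun n => |c n| * r ^ n) (hg : Measurable g)
    (hgC : ∀ v, 0 < v → |g v| ≤ C * Real.exp (α * v))
    (hcg : ∀ᶠ t in 𝓝 s, HasSum (fun n => c n * (1 - t⁻¹) ^ n) (∫ v, g v ∂gammaMeasure 1 t)) :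
    ∑' n, c n * laguerre n u * (1 - s⁻¹) ^ n =
      ∫ v, g v ∂poissonGammaMeasure ((s - 1) * u) s := by
  have hs0 : 0 < s := one_pos.trans hs
  have hρ : 1 - s⁻¹ ∈ Set.Ico (0 : ℝ) 1 :=
    ⟨sub_nonneg.2 (inv_le_one_of_one_le₀ hs.le), sub_lt_self _ (inv_pos.2 hs0)⟩
  have hmoment (m : ℕ) : |(-1) ^ m * ∫ v, g v ∂gammaMeasure (m + 1) s| ≤
      C * (s / (s - α)) * (s / (s - α)) ^ m := by
    rw [abs_mul, abs_pow, abs_neg, abs_one, one_pow, one_mul, mul_assoc, ← pow_succ']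
    exact abs_integral_le_integral_abs.trans (integral_abs_gammaMeasure_le hgC hs0 hα m)
  have hleft := hasSum_poisson_mul (sub_pos.2 hρ.2) (div_pos hs0 (sub_pos.2 hα)).le
    (summable_abs_mul_pow_mul_pow hc hρ) hmoment
    (eventually_tsum_mul_one_add_pow_eq hs hα hg hgC hcg) u
  have hright := hasSum_integral_poissonGammaMeasure
    (mul_nonneg (sub_nonneg.2 hs.le) hu) hs0 hα hg hgC
  simp only [mul_right_comm (c _) (laguerre _ u)]
  refine hleft.unique (hright.congr_fun fun m => ?_)
  have hsign : (-1 : ℝ) ^ m * (-1) ^ m = 1 := by rw [← mul_pow, neg_mul_neg, one_mul, one_pow]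
  rw [neg_pow]
  linear_combination (((s - 1) * u) ^ m / m.factorial * Real.exp (-((s - 1) * u)) *
    ∫ v, g v ∂gammaMeasure (m + 1) s) * hsign

theorem tendsto_tsum_mul_laguerre_mul_pow (hu : 0 ≤ u)
    (hc : ∀ r ∈ Set.Ico (0 : ℝ) 1, Summable fun n => |c n| * r ^ n) (hg : Measurable g)
    (hgC : ∀ v, 0 < v → |g v| ≤ C * Real.exp (α * v))
    (hcg : ∀ᶠ t in atTop, HasSum (fun n => c n * (1 - t⁻¹) ^ n) (∫ v, g v ∂gammaMeasure 1 t))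
    (hgu : ContinuousAt g u) :
    Tendsto (fun ρ => ∑' n, c n * laguerre n u * ρ ^ n) (𝓝[<] 1) (𝓝 (g u)) := by
  have hρ : Tendsto (fun ρ : ℝ => (1 - ρ)⁻¹) (𝓝[<] 1) atTop := by
    refine tendsto_inv_nhdsGT_zero.comp (tendsto_nhdsWithin_iff.2 ⟨?_, ?_⟩)
    · exact (Continuous.tendsto' (by fun_prop) _ _ (sub_self 1)).mono_left nhdsWithin_le_nhds
    · filter_upwards [self_mem_nhdsWithin] with ρ hρ
      exact Set.mem_Ioi.2 (sub_pos.2 (Set.mem_Iio.1 hρ))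
  have hconc := tendsto_integral_of_tendsto_mgf (tendsto_mgf_poissonGammaMeasure hu) hg
    (Eventually.of_forall fun s => (ae_poissonGammaMeasure_pos _ s).mono hgC) hgu
  refine (hconc.comp hρ).congr' ?_
  obtain ⟨T, hT⟩ := eventually_atTop.1 hcg
  filter_upwards [hρ.eventually_gt_atTop 1, hρ.eventually_gt_atTop α,
    hρ.eventually_gt_atTop T] with ρ h1 hα hTρ
  rw [Function.comp_apply, ← tsum_mul_laguerre_mul_pow_eq_integral h1 hα hu hc hg hgC
    ((eventually_ge_nhds hTρ).mono hT), inv_inv, sub_sub_cancel]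

end AbelLaguerre

section Coefficients

open scoped Nat

lemma differentiable_zetaPowAux (k : ℕ) : Differentiable ℂ (zetaPowAux k) := by
  have hne (s : ℂ) (hs : s ≠ 1) : DifferentiableAt ℂ (zetaPowAux k) s := by
    have h : DifferentiableAt ℂ (fun s : ℂ => ((s - 1) * riemannZeta s) ^ k) s :=
      ((differentiableAt_id.sub_const 1).mul (differentiableAt_riemannZeta hs)).pow k
    refine h.congr_of_eventuallyEq ?_
    filter_upwards [isOpen_ne.mem_nhds hs] with z hz using Function.update_of_ne hz _ _
  intro s
  rcases ne_or_eq s 1 with hs | rfl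
  · exact hne s hs
  · refine (analyticAt_of_differentiable_on_punctured_nhds_of_continuousAt ?_ ?_).differentiableAt
    · filter_upwards [self_mem_nhdsWithin] with z hz using hne z hz
    · rw [zetaPowAux, continuousAt_update_same]
      simpa using riemannZeta_residue_one.pow k

lemma re_zetaPowAux_ofReal (k : ℕ) {t : ℝ} (ht : t ≠ 1) :
    (zetaPowAux k t).re = (t - 1) ^ k * (riemannZeta t ^ k).re := by
  have h : zetaPowAux k t = (((t - 1) ^ k : ℝ) : ℂ) * riemannZeta t ^ k := by
    rw [zetaPowAux, Function.update_of_ne (by exact_mod_cast ht), mul_pow]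
    push_cast
    rfl
  rw [h, re_ofReal_mul]

lemma hasSum_lam (k : ℕ) (w : ℝ) :
    HasSum (fun j => lam k j / j ! * w ^ j) (zetaPowAux k (1 + w : ℝ)).re := by
  refine (hasSum_re (hasSum_taylorSeries_of_entire (differentiable_zetaPowAux k) 1
    (1 + w : ℝ))).congr_fun fun j => ?_
  have hterm : ((j ! : ℂ)⁻¹ • (((1 + w : ℝ) : ℂ) - 1) ^ j • iteratedDeriv j (zetaPowAux k) 1) =
      (((j ! : ℝ)⁻¹ * w ^ j : ℝ) : ℂ) * iteratedDeriv j (zetaPowAux k) 1 := by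
    push_cast
    rw [add_sub_cancel_left, smul_eq_mul, smul_eq_mul, mul_assoc]
  rw [hterm, re_ofReal_mul, lam]
  ring

lemma exists_abs_lam_add_div_factorial_le (k m : ℕ) {q : ℝ} (hq : 0 < q) :
    ∃ C, ∀ i, |lam k (i + m) / (i + m)!| ≤ C * q ^ i := by
  have hsum := (hasSum_lam k q⁻¹).summable.abs
  refine ⟨(∑' j, |lam k j / j ! * q⁻¹ ^ j|) * q ^ m, fun i => ?_⟩
  have hterm := hsum.le_tsum (i + m) fun j _ => abs_nonneg _
  rw [abs_mul, abs_of_pos (pow_pos (inv_pos.2 hq) _), inv_pow, ← div_eq_mul_inv,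
    div_le_iff₀ (pow_pos hq _)] at hterm
  rwa [mul_assoc, ← pow_add, add_comm m]

lemma ell_zero (k : ℕ) : ell k 0 = (-1) ^ k * ∑ i ∈ range (k + 1), (-1) ^ i * lam k i / i ! := by
  simp [ell]

lemma neg_one_pow_mul_ell_add_one (k n : ℕ) :
    (-1) ^ (n + 1) * ell k ((n + 1 : ℕ) : ℤ) =
      binomialTransform (fun i => lam k (i + (k + 1)) / (i + (k + 1))!) n := by
  have hsign : (-1 : ℝ) ^ (n + 1) * (-1) ^ (n + 1) = 1 := by
    rw [← mul_pow, neg_mul_neg, one_mul, one_pow]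
  have hIcc : Icc 1 (n + 1) = Ico 1 (n + 2) := by
    ext j
    simp only [mem_Icc, mem_Ico]
    omega
  rw [ell, if_pos (by omega), Int.toNat_natCast, ← mul_assoc, hsign, one_mul, binomialTransform,
    hIcc, sum_Ico_eq_sum_range]
  refine sum_congr rfl fun j _ => ?_
  rw [add_tsub_cancel_left, add_tsub_cancel_right, mul_div_assoc, add_right_comm, add_comm _ j,
    add_comm 1 k]

lemma summable_abs_ell_mul_pow (k : ℕ) :
    ∀ r ∈ Set.Ico (0 : ℝ) 1, Summable fun n : ℕ => |(-1) ^ n * ell k n| * r ^ n := by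
  intro r hr
  obtain ⟨C, hC⟩ := exists_abs_lam_add_div_factorial_le k (k + 1) (sub_pos.2 hr.2)
  have hlt : r * (1 + (1 - r)) < 1 := by nlinarith [sq_pos_of_pos (sub_pos.2 hr.2)]
  have hgeom := summable_geometric_of_lt_one
    (mul_nonneg hr.1 (by linarith [hr.2])) hlt
  refine (summable_nat_add_iff 1).1 (Summable.of_nonneg_of_le
    (fun n => mul_nonneg (abs_nonneg _) (pow_nonneg hr.1 _)) (fun n => ?_)
    (hgeom.mul_left (C * r)))
  rw [neg_one_pow_mul_ell_add_one, mul_pow, pow_succ]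
  calc _ ≤ C * (1 + (1 - r)) ^ n * (r ^ n * r) :=
        mul_le_mul_of_nonneg_right (abs_binomialTransform_le hC n)
          (mul_nonneg (pow_nonneg hr.1 n) hr.1)
    _ = C * r * (r ^ n * (1 + (1 - r)) ^ n) := by ring

lemma hasSum_ell_add_one_mul_pow (k : ℕ) {t : ℝ} (ht : 1 < t) :
    HasSum (fun n : ℕ => (-1) ^ (n + 1) * ell k ((n + 1 : ℕ) : ℤ) * (1 - t⁻¹) ^ (n + 1))
      (((zetaPowAux k t).re - ∑ j ∈ range (k + 1), lam k j / j ! * (t - 1) ^ j) /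
        (t - 1) ^ k) := by
  have ht0 : 0 < t := one_pos.trans ht
  have hw : t - 1 ≠ 0 := (sub_pos.2 ht).ne'
  obtain ⟨C, hC⟩ := exists_abs_lam_add_div_factorial_le k (k + 1) (inv_pos.2 ht0)
  have hx : |1 - t⁻¹| * (1 + t⁻¹) < 1 := by
    rw [abs_of_pos (sub_pos.2 (inv_lt_one_of_one_lt₀ ht))]
    nlinarith [inv_pos.2 ht0]
  have hgen := (hasSum_pow_mul_binomialTransform (inv_pos.2 ht0).le hC hx).mul_left (1 - t⁻¹)
  have htail := ((hasSum_nat_add_iff' (k + 1)).2 (hasSum_lam k (t - 1))).div_const ((t - 1) ^ k)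
  rw [add_sub_cancel] at htail
  rw [← htail.tsum_eq]
  convert! hgen using 1
  · funext n
    rw [neg_one_pow_mul_ell_add_one, pow_succ]
    ring
  · rw [← tsum_mul_left]
    refine tsum_congr fun i => ?_
    have hx' : 1 - t⁻¹ = (t - 1) / t := by rw [sub_div, div_self ht0.ne', one_div]
    rw [sub_sub_cancel, hx', div_pow, inv_pow, ← add_assoc, add_right_comm, pow_add _ (i + 1) k]
    field_simp
    ring

lemma one_add_mul_sum_alternating_mul_pow (μ : ℕ → ℝ) (w : ℝ) (k : ℕ) :
    (1 + w) * ∑ m ∈ range k, ((-1) ^ m * ∑ i ∈ range (m + 1), (-1) ^ i * μ i) * w ^ m =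
      ∑ j ∈ range (k + 1), μ j * w ^ j -
        w ^ k * ((-1) ^ k * ∑ i ∈ range (k + 1), (-1) ^ i * μ i) := by
  induction k with
  | zero => simp
  | succ k ih =>
    have hsign : (-1 : ℝ) ^ (k + 1) * (-1) ^ (k + 1) = 1 := by
      rw [← mul_pow, neg_mul_neg, one_mul, one_pow]
    rw [sum_range_succ _ k, mul_add, ih, sum_range_succ (fun j => μ j * w ^ j) (k + 1),
      sum_range_succ (fun i => (-1) ^ i * μ i) (k + 1)]
    linear_combination w ^ (k + 1) * μ (k + 1) * hsign

lemma sum_aCoef_div_pow (k : ℕ) {w : ℝ} (hw : w ≠ 0) :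
    (1 + w) * ∑ j ∈ range k, aCoef k j / w ^ (j + 1) =
      (∑ j ∈ range (k + 1), lam k j / j ! * w ^ j) / w ^ k - ell k 0 := by
  have hreflect : ∑ j ∈ range k, aCoef k j / w ^ (j + 1) =
      (∑ m ∈ range k, ((-1) ^ m * ∑ i ∈ range (m + 1), (-1) ^ i * (lam k i / i !)) * w ^ m) /
        w ^ k := by
    rw [← sum_range_reflect, sum_div]
    refine sum_congr rfl fun m hm => ?_
    have hmk := mem_range.1 hm
    have hsub : k - 1 - (k - 1 - m) = m := by omega
    have hpow : w ^ k = w ^ m * w ^ (k - 1 - m + 1) := by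
      rw [← pow_add]
      congr 1
      omega
    simp only [aCoef, hsub, hpow, mul_div_assoc]
    field_simp
  have h := one_add_mul_sum_alternating_mul_pow (fun i => lam k i / i !) w k
  rw [hreflect, ← mul_div_assoc, h, sub_div, mul_div_cancel_left₀ _ (pow_ne_zero k hw), ell_zero]
  simp only [mul_div_assoc]

theorem hasSum_ell_mul_pow (k : ℕ) {t : ℝ} (ht : 1 < t) :
    HasSum (fun n : ℕ => (-1) ^ n * ell k n * (1 - t⁻¹) ^ n)
      ((riemannZeta t ^ k).re - t * ∑ j ∈ range k, aCoef k j / (t - 1) ^ (j + 1)) := by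
  have hw : t - 1 ≠ 0 := (sub_pos.2 ht).ne'
  have hpolar := sum_aCoef_div_pow k hw
  rw [add_sub_cancel] at hpolar
  refine (hasSum_nat_add_iff' 1).1 ?_
  convert! hasSum_ell_add_one_mul_pow k ht using 1
  rw [hpolar, re_zetaPowAux_ofReal k ht.ne', sub_div,
    mul_div_cancel_left₀ _ (pow_ne_zero k hw), sum_range_one, pow_zero, pow_zero, one_mul,
    mul_one, Nat.cast_zero]
  ring

end Coefficients

section Divisor

open ProbabilityTheory

lemma LSeriesHasSum_dk (k : ℕ) {s : ℂ} (hs : 1 < s.re) :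
    LSeriesHasSum (fun n => (dk k n : ℂ)) s (riemannZeta s ^ k) := by
  induction k with
  | zero =>
    have hdelta : (fun n => (dk 0 n : ℂ)) = LSeries.delta := by
      funext n
      simp [dk, ArithmeticFunction.one_apply, LSeries.delta]
    rw [hdelta, pow_zero, LSeriesHasSum, funext (LSeries.term_delta s)]
    exact hasSum_ite_eq 1 1
  | succ k ih =>
    have h := ArithmeticFunction.LSeriesHasSum_mul
      (f := ((ArithmeticFunction.zeta ^ k : ArithmeticFunction ℕ) : ArithmeticFunction ℂ))
      (g := (ArithmeticFunction.zeta : ArithmeticFunction ℂ)) (s := s)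
      (by simpa only [ArithmeticFunction.natCoe_apply, dk] using ih)
      (by simpa only [ArithmeticFunction.natCoe_apply] using
        ArithmeticFunction.LSeriesHasSum_zeta hs)
    rw [← ArithmeticFunction.natCoe_mul, ← pow_succ, ← pow_succ] at h
    simpa only [ArithmeticFunction.natCoe_apply, dk] using h

lemma exists_sum_dk_le (k : ℕ) :
    ∃ C : ℝ, ∀ x : ℝ, 0 ≤ x → ∑ n ∈ Icc 1 ⌊x⌋₊, (dk k n : ℝ) ≤ C * x ^ 2 := by
  have hsum := (LSeriesHasSum_dk k (s := 2) (by norm_num)).LSeriesSummable.norm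
  refine ⟨∑' n, ‖LSeries.term (fun n => (dk k n : ℂ)) 2 n‖, fun x hx => ?_⟩
  calc ∑ n ∈ Icc 1 ⌊x⌋₊, (dk k n : ℝ)
      ≤ ∑ n ∈ Icc 1 ⌊x⌋₊, ‖LSeries.term (fun n => (dk k n : ℂ)) 2 n‖ * x ^ 2 := by
        refine sum_le_sum fun n hn => ?_
        obtain ⟨hn1, hnx⟩ := mem_Icc.1 hn
        have : (0 : ℝ) < n := by exact_mod_cast hn1
        rw [LSeries.norm_term_eq, if_neg (by omega), Complex.norm_natCast, re_ofNat,
          Real.rpow_ofNat, div_mul_eq_mul_div, le_div_iff₀ (by positivity)]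
        gcongr
        exact (Nat.le_floor_iff hx).1 hnx
    _ = (∑ n ∈ Icc 1 ⌊x⌋₊, ‖LSeries.term (fun n => (dk k n : ℂ)) 2 n‖) * x ^ 2 := by
        rw [sum_mul]
    _ ≤ _ := by
        gcongr
        exact hsum.sum_le_tsum _ fun n _ => norm_nonneg _

lemma sum_dk_nonneg (k N : ℕ) : (0 : ℝ) ≤ ∑ n ∈ Icc 1 N, (dk k n : ℝ) :=
  sum_nonneg fun _ _ => Nat.cast_nonneg _

lemma measurable_sum_dk (k : ℕ) : Measurable fun x : ℝ => ∑ n ∈ Icc 1 ⌊x⌋₊, (dk k n : ℝ) :=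
  (measurable_from_nat (f := fun N : ℕ => ∑ n ∈ Icc 1 N, (dk k n : ℝ))).comp
    Nat.measurable_floor

lemma integrable_sum_dk_exp_gammaMeasure_one (k : ℕ) {t : ℝ} (ht : 2 < t) :
    Integrable (fun v => ∑ n ∈ Icc 1 ⌊Real.exp v⌋₊, (dk k n : ℝ)) (gammaMeasure 1 t) := by
  obtain ⟨C, hC⟩ := exists_sum_dk_le k
  refine integrable_gammaMeasure_of_abs_le (C := C) (α := 2)
    ((measurable_sum_dk k).comp Real.measurable_exp) (fun v _ => ?_) one_pos (two_pos.trans ht) ht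
  rw [abs_of_nonneg (sum_dk_nonneg k _), two_mul, Real.exp_add, ← sq]
  exact hC _ (Real.exp_pos v).le

lemma integral_sum_dk_exp_gammaMeasure_one (k : ℕ) {t : ℝ} (ht : 2 < t) :
    ∫ v, ∑ n ∈ Icc 1 ⌊Real.exp v⌋₊, (dk k n : ℝ) ∂gammaMeasure 1 t = (riemannZeta t ^ k).re := by
  obtain ⟨C, hC⟩ := exists_sum_dk_le k
  have hO : (fun N => ∑ n ∈ Icc 1 N, (dk k n : ℝ)) =O[atTop] fun N => (N : ℝ) ^ (2 : ℝ) := by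
    refine IsBigO.of_bound C (Eventually.of_forall fun N => ?_)
    have hN := hC N N.cast_nonneg
    rw [Nat.floor_natCast] at hN
    rwa [Real.norm_of_nonneg (sum_dk_nonneg k N), Real.rpow_ofNat,
      Real.norm_of_nonneg (by positivity)]
  have hLSeries := LSeries_eq_mul_integral_of_nonneg (fun n => (dk k n : ℝ)) (r := 2)
    (s := (t : ℂ)) zero_le_two (by rwa [ofReal_re]) hO fun n => Nat.cast_nonneg _
  have hreal : ∫ x in Set.Ioi (1 : ℝ), (∑ n ∈ Icc 1 ⌊x⌋₊, (dk k n : ℂ)) *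
      (x : ℂ) ^ (-((t : ℂ) + 1)) = ((∫ x in Set.Ioi (1 : ℝ),
        (∑ n ∈ Icc 1 ⌊x⌋₊, (dk k n : ℝ)) * x ^ (-t - 1) : ℝ) : ℂ) := by
    rw [← integral_complex_ofReal]
    refine setIntegral_congr_fun measurableSet_Ioi fun x hx => ?_
    push_cast [Complex.ofReal_cpow (zero_le_one.trans (Set.mem_Ioi.1 hx).le)]
    rw [neg_add']
  simp only [ofReal_natCast] at hLSeries
  rw [(LSeriesHasSum_dk k (by rw [ofReal_re]; linarith)).LSeries_eq, hreal, ← ofReal_mul,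
    ← integral_comp_exp_gammaMeasure_one (two_pos.trans ht)
      fun x => ∑ n ∈ Icc 1 ⌊x⌋₊, (dk k n : ℝ)] at hLSeries
  rw [hLSeries, ofReal_re]

end Divisor

section ErrorTerm

open ProbabilityTheory

lemma measurable_Deltak (k : ℕ) : Measurable (Deltak k) :=
  (measurable_sum_dk k).sub (by fun_prop)

lemma Deltak_exp (k : ℕ) (v : ℝ) :
    Deltak k (Real.exp v) = ∑ n ∈ Icc 1 ⌊Real.exp v⌋₊, (dk k n : ℝ) -
      ∑ j ∈ range k, aCoef k j / j.factorial * (Real.exp v * v ^ j) := by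
  rw [Deltak, Real.log_exp, mul_sum]
  simp only [mul_left_comm]

lemma exists_abs_Deltak_exp_le (k : ℕ) :
    ∃ C, ∀ v, 0 < v → |Deltak k (Real.exp v)| ≤ C * Real.exp (2 * v) := by
  obtain ⟨C, hC⟩ := exists_sum_dk_le k
  refine ⟨C + ∑ j ∈ range k, |aCoef k j|, fun v hv => ?_⟩
  rw [Deltak_exp, two_mul, Real.exp_add, ← sq, add_mul, sum_mul]
  refine (abs_sub _ _).trans (add_le_add ?_ ?_)
  · rw [abs_of_nonneg (sum_dk_nonneg k _)]
    exact hC _ (Real.exp_pos v).le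
  · refine (abs_sum_le_sum_abs _ _).trans (sum_le_sum fun j _ => ?_)
    calc |aCoef k j / j.factorial * (Real.exp v * v ^ j)|
        = |aCoef k j| * (Real.exp v * (v ^ j / j.factorial)) := by
          rw [abs_mul, abs_div, Nat.abs_cast, abs_of_nonneg (by positivity : 0 ≤ _ * v ^ j)]
          ring
      _ ≤ |aCoef k j| * Real.exp v ^ 2 := by
          rw [sq]
          gcongr
          exact Real.pow_div_factorial_le_exp v hv.le j

lemma continuousAt_Deltak (k : ℕ) {x : ℝ} (hx : 0 < x) (hxn : x ∉ Set.range ((↑) : ℕ → ℝ)) :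
    ContinuousAt (Deltak k) x := by
  have hfloor : ∀ᶠ y in 𝓝 x, ⌊y⌋₊ = ⌊x⌋₊ := by
    have hlt : (⌊x⌋₊ : ℝ) < x := (Nat.floor_le hx.le).lt_of_ne fun h => hxn ⟨_, h⟩
    filter_upwards [Ioo_mem_nhds hlt (Nat.lt_floor_add_one x)] with y hy
    exact (Nat.floor_eq_iff ((Nat.cast_nonneg _).trans hy.1.le)).2 ⟨hy.1.le, hy.2⟩
  have hcont : ContinuousAt (fun y : ℝ => (∑ n ∈ Icc 1 ⌊x⌋₊, (dk k n : ℝ)) -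
      y * ∑ j ∈ range k, aCoef k j / j.factorial * Real.log y ^ j) x := by
    have := Real.continuousAt_log hx.ne'
    fun_prop
  refine hcont.congr ?_
  filter_upwards [hfloor] with y hy
  rw [Deltak, hy]

lemma integral_Deltak_exp_gammaMeasure_one (k : ℕ) {t : ℝ} (ht : 2 < t) :
    ∫ v, Deltak k (Real.exp v) ∂gammaMeasure 1 t =
      (riemannZeta t ^ k).re - t * ∑ j ∈ range k, aCoef k j / (t - 1) ^ (j + 1) := by
  have hmain (j : ℕ) : Integrable (fun v => aCoef k j / j.factorial * (Real.exp v * v ^ j))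
      (gammaMeasure 1 t) := (integrable_exp_mul_pow_gammaMeasure_one ht j).const_mul _
  simp only [Deltak_exp]
  rw [integral_sub (integrable_sum_dk_exp_gammaMeasure_one k ht)
    (integrable_finsetSum _ fun j _ => hmain j), integral_finsetSum _ fun j _ => hmain j,
    integral_sum_dk_exp_gammaMeasure_one k ht, mul_sum]
  congr 1
  refine sum_congr rfl fun j _ => ?_
  rw [integral_const_mul, integral_exp_mul_pow_gammaMeasure_one (one_lt_two.trans ht)]
  field_simp

theorem tendsto_tsum_ell_mul_laguerre_mul_pow (k : ℕ) {x : ℝ} (hx : 1 ≤ x)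
    (hxn : x ∉ Set.range ((↑) : ℕ → ℝ)) :
    Tendsto (fun ρ => ∑' n : ℕ, (-1) ^ n * ell k n * laguerre n (Real.log x) * ρ ^ n)
      (𝓝[<] 1) (𝓝 (Deltak k x)) := by
  have hx0 : 0 < x := one_pos.trans_le hx
  have hexp := Real.exp_log hx0
  obtain ⟨C, hC⟩ := exists_abs_Deltak_exp_le k
  have hgen : ∀ᶠ t in atTop, HasSum (fun n : ℕ => (-1) ^ n * ell k n * (1 - t⁻¹) ^ n)
      (∫ v, Deltak k (Real.exp v) ∂gammaMeasure 1 t) := by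
    filter_upwards [eventually_gt_atTop 2] with t ht
    rw [integral_Deltak_exp_gammaMeasure_one k ht]
    exact hasSum_ell_mul_pow k (one_lt_two.trans ht)
  have hcont : ContinuousAt (fun v => Deltak k (Real.exp v)) (Real.log x) :=
    (continuousAt_Deltak k hx0 hxn).comp_of_eq Real.continuous_exp.continuousAt hexp
  have h := tendsto_tsum_mul_laguerre_mul_pow (Real.log_nonneg hx) (summable_abs_ell_mul_pow k)
    ((measurable_Deltak k).comp Real.measurable_exp) hC hgen hcont
  rwa [Function.comp_apply, hexp] at h

end ErrorTerm

theorem stmt4 (k : ℕ) (hk : 0 < k) :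
    (∀ ρ ∈ Set.Ico (0 : ℝ) 1, ∀ x : ℝ, 1 ≤ x →
      Summable fun n : ℕ => |(-1 : ℝ) ^ n * ell k n * laguerre n (Real.log x) * ρ ^ n|) ∧
    ∀ᵐ x ∂(volume.restrict (Set.Ici (1 : ℝ))),
      Tendsto (fun ρ : ℝ => ∑' n : ℕ, (-1 : ℝ) ^ n * ell k n * laguerre n (Real.log x) * ρ ^ n)
        (𝓝[<] 1) (𝓝 (Deltak k x)) := by
  refine ⟨fun ρ hρ x _ => summable_abs_mul_laguerre_mul_pow (summable_abs_ell_mul_pow k) hρ _, ?_⟩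
  have hnotMem : ∀ᵐ x : ℝ ∂volume.restrict (Set.Ici 1), x ∉ Set.range ((↑) : ℕ → ℝ) :=
    ae_restrict_of_ae ((Set.countable_range _).ae_notMem volume)
  filter_upwards [hnotMem, ae_restrict_mem measurableSet_Ici] with x hxn hx
  exact tendsto_tsum_ell_mul_laguerre_mul_pow k hx hxn
end

section
/- The Lindelöf Hypothesis holds if and only if, for every positive integer k, the limit lim_{ρ→1⁻} Σ_{n=0}^∞ ℓ_{n,k}² ρ^{2n} exists and is finite (i.e. the sequence (ℓ_{n,k}²)_{n ≥ 0} is Abel summable). -/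
open scoped Real Topology
open Complex Filter MeasureTheory Finset Asymptotics

open scoped ComplexConjugate

/-! The Möbius map `z ↦ 1 / (1 + z)` carries the unit disc onto the half-plane `1 / 2 < re s`, and
the `ℓ_{n,k}` are the Taylor coefficients of `ζ ^ k` minus its polar part, transplanted to the disc.
As the numbers `ℓ_{n,k} ^ 2` are nonnegative, they are Abel summable if and only if they are
summable, that is, if and only if this function lies in the Hardy space `H²` of the disc.

Under the Lindelöf Hypothesis the Phragmén–Lindelöf principle gives `ζ(s) = O(|s| ^ ε)` on the whole
half-plane away from `s = 1`. The transplanted function is therefore `O(|1 + z| ^ (-1 / 4))`, whose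
square has bounded means over circles by Kolmogorov's inequality, and Parseval's identity applies.

Conversely, the Cauchy–Schwarz inequality bounds a function in `H²` by `O((1 - |z|²) ^ (-1 / 2))`,
so in particular `|ζ(s)| ^ k = O(|s|² / (2 re s - 1))`. This is used at distance `|s| ^ (-2)` from
the critical line, to which one returns by a polynomial bound for the derivative of `(s - 1) ζ(s)`.
The total loss is a fixed power of `|s|`, which becomes arbitrarily small after taking `k`-th
roots. -/

/-! ### Power series and integral means -/

theorem summable_of_tendsto_of_hasSum_le {α ι : Type*} {l : Filter α} [l.NeBot] {f : α → ι → ℝ}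
    {g : ι → ℝ} {c : ℝ} (hf : ∀ᶠ x in l, 0 ≤ f x ∧ ∃ S ≤ c, HasSum (f x) S)
    (hlim : ∀ i, Tendsto (f · i) l (𝓝 (g i))) : Summable g := by
  refine summable_of_sum_le (c := c)
    (fun i => ge_of_tendsto (hlim i) (hf.mono fun _ hx => hx.1 i)) fun u => ?_
  refine le_of_tendsto (tendsto_finsetSum u fun i _ => hlim i) (hf.mono fun x hx => ?_)
  obtain ⟨hnonneg, S, hSc, hS⟩ := hx
  exact (sum_le_hasSum u (fun i _ => hnonneg i) hS).trans hSc

theorem sq_norm_le_of_hasSum_mul_pow {a : ℕ → ℂ} {z S : ℂ} {A : ℝ}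
    (hA : HasSum (fun n => ‖a n‖ ^ 2) A) (hz : ‖z‖ < 1) (hS : HasSum (fun n => a n * z ^ n) S) :
    ‖S‖ ^ 2 ≤ A * (1 - ‖z‖ ^ 2)⁻¹ := by
  have hgeom : HasSum (fun n => (‖z‖ ^ n) ^ 2) (1 - ‖z‖ ^ 2)⁻¹ := by
    simpa only [pow_right_comm] using
      hasSum_geometric_of_lt_one (sq_nonneg ‖z‖) (pow_lt_one₀ (norm_nonneg z) hz two_ne_zero)
  refine le_of_tendsto (hS.norm.pow 2) (Eventually.of_forall fun u => ?_)
  calc ‖∑ n ∈ u, a n * z ^ n‖ ^ 2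
      ≤ (∑ n ∈ u, ‖a n‖ * ‖z‖ ^ n) ^ 2 := by
        gcongr
        exact norm_sum_le_of_le u fun n _ => by rw [norm_mul, norm_pow]
    _ ≤ (∑ n ∈ u, ‖a n‖ ^ 2) * ∑ n ∈ u, (‖z‖ ^ n) ^ 2 := Finset.sum_mul_sq_le_sq_mul_sq _ _ _
    _ ≤ A * (1 - ‖z‖ ^ 2)⁻¹ :=
        mul_le_mul (sum_le_hasSum u (fun n _ => by positivity) hA)
          (sum_le_hasSum u (fun n _ => by positivity) hgeom) (by positivity)
          (hA.nonneg fun n => by positivity)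

theorem sum_sq_norm_mul_pow_eq_circleAverage (a : ℕ → ℂ) (ρ : ℝ) (N : ℕ) :
    ∑ n ∈ range N, ‖a n‖ ^ 2 * ρ ^ (2 * n) =
      Real.circleAverage (fun z => ‖∑ n ∈ range N, a n * z ^ n‖ ^ 2) 0 ρ := by
  set p : Polynomial ℂ := ∑ n ∈ range N, Polynomial.monomial n (a n * ρ ^ n) with hp
  have hcoeff : ∀ n, p.coeff n = if n < N then a n * ρ ^ n else 0 := fun n => by
    simp [hp, Polynomial.coeff_monomial]
  have hsupp : p.support ⊆ range N := fun n hn => by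
    by_contra hnN
    exact Polynomial.mem_support_iff.mp hn (by rw [hcoeff, if_neg (mt mem_range.mpr hnN)])
  rw [Real.circleAverage_eq_circleAverage_zero_one]
  calc ∑ n ∈ range N, ‖a n‖ ^ 2 * ρ ^ (2 * n)
      = ∑ n ∈ range N, ‖p.coeff n‖ ^ 2 := sum_congr rfl fun n hn => by
        rw [hcoeff, if_pos (mem_range.mp hn), norm_mul, norm_pow, norm_real, mul_pow,
          pow_right_comm, Real.norm_eq_abs, sq_abs, pow_mul]
    _ = ∑ n ∈ p.support, ‖p.coeff n‖ ^ 2 := (sum_subset hsupp fun n _ hn => by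
        rw [Polynomial.notMem_support_iff.mp hn, norm_zero, zero_pow two_ne_zero]).symm
    _ = Real.circleAverage (fun z => ‖p.eval z‖ ^ 2) 0 1 :=
        p.sum_sq_norm_coeff_eq_circleAverage
    _ = _ := by
        congr! with z
        rw [hp, Polynomial.eval_finsetSum]
        refine sum_congr rfl fun n _ => ?_
        rw [Polynomial.eval_monomial, add_zero, mul_pow, mul_assoc]

theorem hasSum_sq_norm_mul_pow_circleAverage {a : ℕ → ℂ} {f : ℂ → ℂ} {ρ : ℝ}
    (hf : ∀ z ∈ Metric.sphere 0 |ρ|, HasSum (fun n => a n * z ^ n) (f z)) :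
    HasSum (fun n => ‖a n‖ ^ 2 * ρ ^ (2 * n))
      (Real.circleAverage (fun z => ‖f z‖ ^ 2) 0 ρ) := by
  have hnonneg : ∀ n, 0 ≤ ‖a n‖ ^ 2 * ρ ^ (2 * n) := fun n => by rw [pow_mul]; positivity
  have hsum : Summable fun n => ‖a n‖ * |ρ| ^ n := by
    simpa using (hf ρ (by simp)).summable.norm
  rw [hasSum_iff_tendsto_nat_of_nonneg hnonneg]
  simp only [sum_sq_norm_mul_pow_eq_circleAverage, Real.circleAverage_def]
  refine Tendsto.const_smul ?_ _
  refine intervalIntegral.tendsto_integral_filter_of_dominated_convergence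
    (fun _ => (∑' n, ‖a n‖ * |ρ| ^ n) ^ 2) (Eventually.of_forall fun N => ?_)
    (Eventually.of_forall fun N => ae_of_all _ fun θ _ => ?_) intervalIntegrable_const
    (ae_of_all _ fun θ _ => ?_)
  · exact Continuous.aestronglyMeasurable (by fun_prop)
  · rw [norm_pow, norm_norm]
    gcongr
    refine (norm_sum_le _ _).trans ?_
    simp only [norm_mul, norm_pow, norm_circleMap_zero]
    exact hsum.sum_le_tsum _ fun n _ => by positivity
  · exact ((hf _ (circleMap_mem_sphere' 0 ρ θ)).tendsto_sum_nat.norm).pow 2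

theorem norm_rpow_mul_cos_le_re_cpow {w : ℂ} (hw : 0 < w.re) {p : ℝ} (hp : |p| < 1) :
    ‖w‖ ^ p * Real.cos (p * (π / 2)) ≤ (w ^ (p : ℂ)).re := by
  have harg : |w.arg| ≤ π / 2 := (abs_arg_lt_pi_div_two_iff.mpr (Or.inl hw)).le
  rw [cpow_ofReal_re, ← Real.cos_abs (p * _), ← Real.cos_abs (w.arg * p), abs_mul, abs_mul,
    mul_comm |w.arg|, abs_of_pos Real.pi_div_two_pos]
  gcongr
  refine Real.cos_le_cos_of_nonneg_of_le_pi (by positivity) ?_ (by gcongr)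
  nlinarith [Real.pi_pos]

/- Kolmogorov's inequality: take real parts in the mean value property of `f ^ p`. -/
theorem circleAverage_norm_rpow_le {f : ℂ → ℂ} {c : ℂ} {R p : ℝ} (hR : 0 < R)
    (hf : DiffContOnCl ℂ f (Metric.ball c R)) (hre : ∀ z ∈ Metric.closedBall c R, 0 < (f z).re)
    (hp : |p| < 1) :
    Real.circleAverage (fun z => ‖f z‖ ^ p) c R ≤ ‖f c‖ ^ p / Real.cos (p * (π / 2)) := by
  have hslit : ∀ z ∈ Metric.closedBall c R, f z ∈ slitPlane := fun z hz => Or.inl (hre z hz)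
  have hcont : ContinuousOn f (Metric.closedBall c R) := hf.continuousOn_ball
  have hpow : DiffContOnCl ℂ (fun z => f z ^ (p : ℂ)) (Metric.ball c R) :=
    ⟨hf.differentiableOn.cpow_const fun z hz => hslit z (Metric.ball_subset_closedBall hz), by
      rw [closure_ball c hR.ne']
      exact hcont.cpow_const hslit⟩
  have hpow_cont : ContinuousOn (fun z => f z ^ (p : ℂ)) (Metric.sphere c R) :=
    hpow.continuousOn_ball.mono Metric.sphere_subset_closedBall
  have hnorm_cont : ContinuousOn (fun z => ‖f z‖ ^ p) (Metric.sphere c R) := by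
    simpa only [norm_cpow_real] using hpow_cont.norm
  have hcos : 0 < Real.cos (p * (π / 2)) := by
    have := abs_lt.mp hp
    exact Real.cos_pos_of_mem_Ioo ⟨by nlinarith [Real.pi_pos], by nlinarith [Real.pi_pos]⟩
  rw [le_div_iff₀ hcos, mul_comm]
  calc Real.cos (p * (π / 2)) * Real.circleAverage (fun z => ‖f z‖ ^ p) c R
      = Real.circleAverage (fun z => Real.cos (p * (π / 2)) • ‖f z‖ ^ p) c R :=
        (Real.circleAverage_fun_smul (a := Real.cos (p * (π / 2)))).symm
    _ ≤ Real.circleAverage (reCLM ∘ fun z => f z ^ (p : ℂ)) c R := by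
        refine Real.circleAverage_mono ((hnorm_cont.const_mul _).circleIntegrable hR.le)
          ((continuous_re.comp_continuousOn hpow_cont).circleIntegrable hR.le) fun z hz => ?_
        rw [abs_of_pos hR] at hz
        rw [smul_eq_mul, mul_comm]
        exact norm_rpow_mul_cos_le_re_cpow (hre z (Metric.sphere_subset_closedBall hz)) hp
    _ = (f c ^ (p : ℂ)).re := by
        rw [reCLM.circleAverage_comp_comm (hpow_cont.circleIntegrable hR.le),
          DiffContOnCl.circleAverage (by rwa [abs_of_pos hR])]
        rfl
    _ ≤ ‖f c‖ ^ p := by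
        rw [← norm_cpow_real]
        exact re_le_norm _

theorem isBigO_rpow_exp_norm_add (c : ℂ) (b : ℝ) :
    (fun z : ℂ => ‖z + c‖ ^ b) =O[Bornology.cobounded ℂ] fun z => Real.exp ‖z‖ := by
  have hshift : Tendsto (fun z : ℂ => ‖z + c‖) (Bornology.cobounded ℂ) atTop :=
    tendsto_norm_cobounded_atTop.comp (tendsto_add_const_cobounded c)
  refine ((isLittleO_rpow_exp_atTop b).isBigO.comp_tendsto hshift).trans ?_
  refine IsBigO.of_bound (Real.exp ‖c‖) (Eventually.of_forall fun z => ?_)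
  simp only [Function.comp_apply, Real.norm_eq_abs, Real.abs_exp, ← Real.exp_add]
  gcongr
  linarith [norm_add_le z c]

theorem isBigO_mul_cpow_neg {α : Type*} {l : Filter α} {f u : α → ℂ} {a b : ℝ}
    (hf : f =O[l] fun x => ‖u x‖ ^ b) (hu : ∀ᶠ x in l, u x ≠ 0) :
    (fun x => f x * u x ^ ((-a : ℝ) : ℂ)) =O[l] fun x => ‖u x‖ ^ (b - a) := by
  refine (hf.mul (isBigO_refl (fun x => u x ^ ((-a : ℝ) : ℂ)) l).norm_right).congr'
    (by rfl) (hu.mono fun x hx => ?_)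
  simp only [norm_cpow_real]
  rw [← Real.rpow_add (norm_pos_iff.mpr hx), sub_eq_add_neg]

/- Apply the Phragmén–Lindelöf principle to the bounded function `f s / s ^ a`. -/
theorem norm_le_rpow_of_le_re {f : ℂ → ℂ} {A a b c : ℝ} (hc : 0 < c)
    (hd : DiffContOnCl ℂ f {s | c < s.re})
    (hpoly : f =O[Bornology.cobounded ℂ ⊓ 𝓟 {s | c < s.re}] fun s => ‖s‖ ^ b)
    (hreal : (fun x : ℝ => f x) =O[atTop] fun x => ‖(x : ℂ)‖ ^ a)
    (hbdry : ∀ s, s.re = c → ‖f s‖ ≤ A * ‖s‖ ^ a) {s : ℂ} (hs : c ≤ s.re) :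
    ‖f s‖ ≤ A * ‖s‖ ^ a := by
  set g : ℂ → ℂ := fun z => f (z + c) * (z + c) ^ ((-a : ℝ) : ℂ)
  have hne {z : ℂ} (hz : 0 ≤ z.re) : z + c ≠ 0 := fun h => by
    have := congrArg re h
    simp only [add_re, ofReal_re, zero_re] at this
    linarith
  have hg_le {z : ℂ} (hz : 0 ≤ z.re) : ‖g z‖ ≤ A ↔ ‖f (z + c)‖ ≤ A * ‖z + c‖ ^ a := by
    have hpos := norm_pos_iff.mpr (hne hz)
    rw [norm_mul, norm_cpow_real, Real.rpow_neg hpos.le, ← div_eq_mul_inv,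
      div_le_iff₀ (Real.rpow_pos_of_pos hpos a)]
  have hmaps : Set.MapsTo (fun z : ℂ => z + c) {z | 0 < z.re} {s | c < s.re} := fun z hz => by
    simpa using hz
  have hgd : DiffContOnCl ℂ g {z | 0 < z.re} := by
    refine (hd.comp (differentiable_id.add_const (c : ℂ)).diffContOnCl hmaps).smul
      (DifferentiableOn.diffContOnCl fun z hz => ?_)
    rw [closure_setOfPred_lt_re, Set.mem_ofPred_eq] at hz
    have hslit : z + c ∈ slitPlane := Or.inl (by simp only [add_re, ofReal_re]; linarith)
    exact ((differentiableAt_id.add_const _).cpow_const hslit).differentiableWithinAt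
  have hgexp : g =O[Bornology.cobounded ℂ ⊓ 𝓟 {z | 0 < z.re}]
      fun z => Real.exp (1 * ‖z‖ ^ (1 : ℝ)) := by
    have hg := isBigO_mul_cpow_neg (a := a) (hpoly.comp_tendsto
      ((tendsto_add_const_cobounded (c : ℂ)).inf (tendsto_principal_principal.mpr hmaps)))
      (eventually_inf_principal.mpr (Eventually.of_forall fun z hz => hne (le_of_lt hz)))
    simpa [g] using hg.trans ((isBigO_rpow_exp_norm_add c (b - a)).mono inf_le_left)
  have hgreal : IsBoundedUnder (· ≤ ·) atTop fun x : ℝ => ‖g x‖ := by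
    have hg := isBigO_mul_cpow_neg (a := a)
      (hreal.comp_tendsto (tendsto_atTop_add_const_right _ c tendsto_id))
      ((eventually_ge_atTop 0).mono fun x hx => by simpa using hne (z := x) (by simpa using hx))
    exact (isBigO_one_iff ℝ).mp (by simpa [g] using hg)
  simpa using (hg_le (by simpa using hs)).mp
    (PhragmenLindelof.right_half_plane_of_bounded_on_real (z := s - c) hgd
      ⟨1, one_lt_two, 1, hgexp⟩ hgreal
      (fun x => (hg_le (by simp)).mpr (hbdry _ (by simp))) (by simpa using hs))

theorem exists_tendsto_tsum_mul_pow_iff_summable {b : ℕ → ℝ} (hb : 0 ≤ b)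
    (hconv : ∀ᶠ ρ : ℝ in 𝓝[<] 1, Summable fun n => b n * ρ ^ (2 * n)) :
    (∃ L, Tendsto (fun ρ : ℝ => ∑' n, b n * ρ ^ (2 * n)) (𝓝[<] 1) (𝓝 L)) ↔ Summable b := by
  refine ⟨fun ⟨L, hL⟩ => ?_, fun hsum => ⟨∑' n, b n, ?_⟩⟩
  · refine summable_of_tendsto_of_hasSum_le (l := 𝓝[<] (1 : ℝ)) (c := L + 1)
      (f := fun ρ n => b n * ρ ^ (2 * n)) ?_ fun n => ?_
    · filter_upwards [hconv, hL.eventually (gt_mem_nhds (lt_add_one L))] with ρ hρ hle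
      exact ⟨fun n => mul_nonneg (hb n) (by rw [pow_mul]; positivity), _, hle.le, hρ.hasSum⟩
    · exact tendsto_nhdsWithin_of_tendsto_nhds (Continuous.tendsto' (by fun_prop) _ _ (by simp))
  · have hsq : Tendsto (fun ρ : ℝ => ρ ^ 2) (𝓝[<] 1) (𝓝[<] 1) := by
      refine tendsto_nhdsWithin_iff.mpr ⟨tendsto_nhdsWithin_of_tendsto_nhds
        (Continuous.tendsto' (by fun_prop) _ _ (by simp)), ?_⟩
      filter_upwards [Ioo_mem_nhdsLT (zero_lt_one' ℝ)] with ρ hρ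
      exact pow_lt_one₀ hρ.1.le hρ.2 two_ne_zero
    simpa only [Function.comp_def, ← pow_mul] using
      (Real.tendsto_tsum_powerSeries_nhdsWithin_lt hsum.hasSum.tendsto_sum_nat).comp hsq

section BinomialTransform

variable {𝕜 : Type*} [RCLike 𝕜]

theorem hasSum_choose_mul_pow (i : ℕ) {w : 𝕜} (hw : ‖w‖ < 1) :
    HasSum (fun m : ℕ => (m.choose i : 𝕜) * w ^ m) (w ^ i / (1 - w) ^ (i + 1)) := by
  have hshift : HasSum (fun m : ℕ => ((m + i).choose i : 𝕜) * w ^ (m + i))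
      (w ^ i / (1 - w) ^ (i + 1)) := by
    simpa only [pow_add, mul_assoc, one_div_mul_eq_div] using
      (hasSum_choose_mul_geometric_of_norm_lt_one i hw).mul_right (w ^ i)
  refine ((add_left_injective i).hasSum_iff fun m hm => ?_).mp hshift
  have hmi : m < i := not_le.mp fun him => hm ⟨m - i, Nat.sub_add_cancel him⟩
  rw [Nat.choose_eq_zero_of_lt hmi, Nat.cast_zero, zero_mul]

variable {b : ℕ → 𝕜} {w : 𝕜}

theorem summable_mul_choose_mul_pow (hw : ‖w‖ < 1)
    (hb : Summable fun i => ‖b i‖ * (‖w‖ / (1 - ‖w‖)) ^ i) :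
    Summable fun p : ℕ × ℕ => b p.1 * ((p.2.choose p.1 : 𝕜) * w ^ p.2) := by
  have hrow (i : ℕ) : HasSum (fun m : ℕ => ‖b i * ((m.choose i : 𝕜) * w ^ m)‖)
      (‖b i‖ * (‖w‖ ^ i / (1 - ‖w‖) ^ (i + 1))) := by
    simpa using (hasSum_choose_mul_pow i (w := ‖w‖) (by rwa [norm_norm])).mul_left ‖b i‖
  refine .of_norm ((summable_prod_of_nonneg fun _ => norm_nonneg _).mpr
    ⟨fun i => (hrow i).summable, ?_⟩)
  refine (hb.div_const (1 - ‖w‖)).congr fun i => ?_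
  rw [(hrow i).tsum_eq, div_pow, pow_succ, mul_div_assoc, div_div]

/- Expand each power of `w / (1 - w)` in powers of `w` and interchange the two summations. -/
theorem hasSum_binomial_transform {S : 𝕜} (hw : ‖w‖ < 1)
    (hb : Summable fun i => ‖b i‖ * (‖w‖ / (1 - ‖w‖)) ^ i)
    (hS : HasSum (fun i => b i * (w / (1 - w)) ^ i) S) :
    HasSum (fun m : ℕ => (∑ i ∈ range (m + 1), (m.choose i : 𝕜) * b i) * w ^ m)
      (S / (1 - w)) := by
  have hdouble := (summable_mul_choose_mul_pow hw hb).hasSum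
  have hrows : HasSum (fun i => b i * (w ^ i / (1 - w) ^ (i + 1))) (S / (1 - w)) := by
    refine (hS.div_const (1 - w)).congr_fun fun i => ?_
    rw [div_pow, pow_succ, mul_div_assoc, div_div]
  rw [(hdouble.prod_fiberwise fun i => (hasSum_choose_mul_pow i hw).mul_left (b i)).unique hrows]
    at hdouble
  refine ((Equiv.prodComm ℕ ℕ).hasSum_iff.mpr hdouble).prod_fiberwise fun m => ?_
  have hcolumn : (∑ i ∈ range (m + 1), (m.choose i : 𝕜) * b i) * w ^ m =
      ∑ i ∈ range (m + 1), b i * ((m.choose i : 𝕜) * w ^ m) := by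
    rw [sum_mul]
    exact sum_congr rfl fun i _ => by ring
  rw [hcolumn]
  refine hasSum_sum_of_ne_finset_zero fun i hi => ?_
  have hmi : m < i := by simpa using hi
  simp [Nat.choose_eq_zero_of_lt hmi]

end BinomialTransform

/-! ### Growth of `ζ` to the right of the critical line -/

theorem riemannZeta₁_eq_mul {s : ℂ} (hs : s ≠ 1) : riemannZeta₁ s = (s - 1) * riemannZeta s := by
  rw [riemannZeta_eq_inv_sub_mul hs, mul_inv_cancel_left₀ (sub_ne_zero.mpr hs)]

theorem zetaPowAux_eq (k : ℕ) : zetaPowAux k = fun s => riemannZeta₁ s ^ k := by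
  funext s
  rcases eq_or_ne s 1 with rfl | hs
  · simp [zetaPowAux]
  · rw [zetaPowAux, Function.update_of_ne hs, riemannZeta₁_eq_mul hs]

/-- The function `t ↦ {t}` on `(1, ∞)`, extended by zero. Its Mellin transform at `-s` is the
integral `∫ {t} t ^ (-s - 1) dt` over `(1, ∞)` that continues `ζ` to the half-plane `0 < re s`. -/
noncomputable def fractTail : ℝ → ℂ :=
  Set.indicator (Set.Ioi 1) fun t => (Int.fract t : ℝ)

theorem norm_fractTail_le (t : ℝ) : ‖fractTail t‖ ≤ 1 := by
  refine (norm_indicator_le_norm_self _ t).trans ?_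
  rw [norm_real, Real.norm_of_nonneg (Int.fract_nonneg t)]
  exact (Int.fract_lt_one t).le

theorem measurable_fractTail : Measurable fractTail :=
  (Complex.measurable_ofReal.comp measurable_fract).indicator measurableSet_Ioi

theorem mellin_fractTail (s : ℂ) :
    mellin fractTail (-s) = ∫ t in Set.Ioi (1 : ℝ), (t : ℂ) ^ (-s - 1) * (Int.fract t : ℝ) := by
  have hind : (fun t : ℝ => (t : ℂ) ^ (-s - 1) • fractTail t) =
      Set.indicator (Set.Ioi 1) fun t : ℝ => (t : ℂ) ^ (-s - 1) * (Int.fract t : ℝ) := by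
    funext t
    simp only [fractTail, Set.indicator_apply, smul_eq_mul, mul_ite, mul_zero]
  rw [mellin, hind, setIntegral_indicator measurableSet_Ioi,
    Set.inter_eq_right.mpr (Set.Ioi_subset_Ioi zero_le_one)]

theorem norm_cpow_mul_fract_le {t : ℝ} (ht : 0 < t) (s : ℂ) :
    ‖(t : ℂ) ^ s * (Int.fract t : ℝ)‖ ≤ t ^ s.re := by
  rw [norm_mul, norm_cpow_eq_rpow_re_of_pos ht, norm_real,
    Real.norm_of_nonneg (Int.fract_nonneg t)]
  exact mul_le_of_le_one_right (Real.rpow_nonneg ht.le _) (Int.fract_lt_one t).le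

theorem integrableOn_cpow_mul_fract {s : ℂ} (hs : 0 < s.re) :
    IntegrableOn (fun t : ℝ => (t : ℂ) ^ (-s - 1) * (Int.fract t : ℝ)) (Set.Ioi 1) := by
  have hre : (-s - 1).re < -1 := by rw [sub_re, neg_re, one_re]; linarith
  refine (integrableOn_Ioi_rpow_of_lt hre zero_lt_one).mono' (by fun_prop) ?_
  filter_upwards [ae_restrict_mem measurableSet_Ioi] with t ht
  exact norm_cpow_mul_fract_le (zero_lt_one.trans ht) _

theorem norm_mellin_fractTail_le {s : ℂ} (hs : 0 < s.re) : ‖mellin fractTail (-s)‖ ≤ 1 / s.re := by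
  have hre : (-s - 1).re < -1 := by rw [sub_re, neg_re, one_re]; linarith
  calc ‖mellin fractTail (-s)‖
      ≤ ∫ t in Set.Ioi (1 : ℝ), t ^ (-s - 1).re := by
        rw [mellin_fractTail]
        refine norm_integral_le_of_norm_le (integrableOn_Ioi_rpow_of_lt hre zero_lt_one) ?_
        filter_upwards [ae_restrict_mem measurableSet_Ioi] with t ht
        exact norm_cpow_mul_fract_le (zero_lt_one.trans ht) _
    _ = 1 / s.re := by
        rw [integral_Ioi_rpow_of_lt hre zero_lt_one]
        simp

theorem differentiableAt_mellin_fractTail {s : ℂ} (hs : 0 < s.re) :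
    DifferentiableAt ℂ (fun s => mellin fractTail (-s)) s := by
  have hloc : LocallyIntegrableOn fractTail (Set.Ioi 0) := by
    refine (LocallyIntegrable.mono (locallyIntegrable_const (1 : ℂ))
      measurable_fractTail.aestronglyMeasurable (ae_of_all _ fun t => ?_)).locallyIntegrableOn _
    simpa using norm_fractTail_le t
  have htop : fractTail =O[atTop] (fun t : ℝ => t ^ (-(0 : ℝ))) :=
    isBigO_of_le _ fun t => by simpa using norm_fractTail_le t
  have hbot : fractTail =O[𝓝[>] 0] (fun t : ℝ => t ^ (-(-s.re - 1))) := by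
    refine EventuallyEq.trans_isBigO (f₂ := fun _ => (0 : ℂ)) ?_ (isBigO_zero _ _)
    filter_upwards [Ioo_mem_nhdsGT (zero_lt_one' ℝ)] with t ht
    exact Set.indicator_of_notMem (Set.notMem_Ioi.mpr ht.2.le) _
  have hmellin : DifferentiableAt ℂ (mellin fractTail) (-s) :=
    mellin_differentiableAt_of_isBigO_rpow hloc htop (by simpa using hs) hbot (by simp)
  exact hmellin.comp s differentiableAt_id.neg

theorem natCast_floor_mul_cpow {t : ℝ} (ht : 0 < t) (s : ℂ) :
    (⌊t⌋₊ : ℂ) * (t : ℂ) ^ (-(s + 1)) =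
      (t : ℂ) ^ (-s) - (t : ℂ) ^ (-s - 1) * (Int.fract t : ℝ) := by
  have hfloor : (⌊t⌋₊ : ℂ) = t - (Int.fract t : ℝ) := by
    rw [← ofReal_natCast, natCast_floor_eq_intCast_floor ht.le, ← Int.self_sub_fract, ofReal_sub]
  have hpow : (t : ℂ) ^ (-s) = t * (t : ℂ) ^ (-s - 1) := by
    rw [cpow_sub _ _ (ofReal_ne_zero.mpr ht.ne'), cpow_one,
      mul_div_cancel₀ _ (ofReal_ne_zero.mpr ht.ne')]
  rw [hfloor, hpow, neg_add']
  ring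

theorem riemannZeta_eq_mul_integral_floor {s : ℂ} (hs : 1 < s.re) :
    riemannZeta s = s * ∫ t in Set.Ioi (1 : ℝ), (⌊t⌋₊ : ℂ) * (t : ℂ) ^ (-(s + 1)) := by
  have hL := LSeries_eq_mul_integral_of_nonneg (fun _ => 1) zero_le_one hs
    (by simpa using isBigO_refl _ _) (by simp)
  rw [← LSeries_one_eq_riemannZeta hs]
  simpa [Pi.one_def] using hL

theorem riemannZeta₁_eq_of_one_lt_re {s : ℂ} (hs : 1 < s.re) :
    riemannZeta₁ s = s - s * (s - 1) * mellin fractTail (-s) := by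
  have hs1 : s ≠ 1 := by rintro rfl; simp at hs
  have hpole : ∫ t in Set.Ioi (1 : ℝ), (t : ℂ) ^ (-s) = 1 / (s - 1) := by
    rw [integral_Ioi_cpow_of_lt (by simpa using hs) zero_lt_one, ofReal_one, one_cpow, neg_div,
      ← div_neg, neg_add, neg_neg, sub_eq_add_neg]
  have hsplit : ∫ t in Set.Ioi (1 : ℝ), (⌊t⌋₊ : ℂ) * (t : ℂ) ^ (-(s + 1)) =
      1 / (s - 1) - mellin fractTail (-s) := by
    rw [mellin_fractTail, ← hpole, ← integral_sub
      (integrableOn_Ioi_cpow_of_lt (by simpa using hs) zero_lt_one)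
      (integrableOn_cpow_mul_fract (zero_lt_one.trans hs))]
    exact setIntegral_congr_fun measurableSet_Ioi fun t ht =>
      natCast_floor_mul_cpow (zero_lt_one.trans ht) s
  rw [riemannZeta₁_eq_mul hs1, riemannZeta_eq_mul_integral_floor hs, hsplit]
  have := sub_ne_zero.mpr hs1
  field_simp

theorem riemannZeta₁_eq {s : ℂ} (hs : 0 < s.re) :
    riemannZeta₁ s = s - s * (s - 1) * mellin fractTail (-s) := by
  have hopen (c : ℝ) : IsOpen {z : ℂ | c < z.re} := isOpen_lt continuous_const continuous_re
  have hg : AnalyticOnNhd ℂ (fun s => s - s * (s - 1) * mellin fractTail (-s))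
      {z : ℂ | 0 < z.re} := by
    refine DifferentiableOn.analyticOnNhd (fun z hz => ?_) (hopen 0)
    have := differentiableAt_mellin_fractTail hz
    exact DifferentiableAt.differentiableWithinAt (by fun_prop)
  refine (differentiable_riemannZeta₁.differentiableOn.analyticOnNhd
    (hopen 0)).eqOn_of_preconnected_of_eventuallyEq hg (convex_halfSpace_re_gt 0).isPreconnected
    (z₀ := 2) (by simp) ?_ hs
  filter_upwards [(hopen 1).mem_nhds (by simp : (1 : ℝ) < (2 : ℂ).re)] with z hz
  exact riemannZeta₁_eq_of_one_lt_re hz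

theorem norm_riemannZeta₁_le {s : ℂ} (hs : 0 < s.re) :
    ‖riemannZeta₁ s‖ ≤ ‖s‖ + ‖s‖ * ‖s - 1‖ / s.re := by
  rw [riemannZeta₁_eq hs, ← norm_mul, div_eq_mul_one_div]
  refine (norm_sub_le _ _).trans ?_
  rw [norm_mul (s * (s - 1))]
  gcongr
  exact norm_mellin_fractTail_le hs

theorem norm_riemannZeta₁_le_of_quarter_le_re {s : ℂ} (hs : 1 / 4 ≤ s.re) :
    ‖riemannZeta₁ s‖ ≤ 4 * (‖s‖ + 1) ^ 2 := by
  have hsub : ‖s - 1‖ ≤ ‖s‖ + 1 := by simpa using norm_sub_le s 1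
  calc ‖riemannZeta₁ s‖ ≤ ‖s‖ + ‖s‖ * ‖s - 1‖ / s.re := norm_riemannZeta₁_le (by linarith)
    _ ≤ ‖s‖ + ‖s‖ * (‖s‖ + 1) / (1 / 4) := by gcongr
    _ ≤ 4 * (‖s‖ + 1) ^ 2 := by nlinarith [norm_nonneg s]

theorem norm_deriv_riemannZeta₁_le {s : ℂ} (hs : 1 / 2 ≤ s.re) :
    ‖deriv riemannZeta₁ s‖ ≤ 16 * (‖s‖ + 2) ^ 2 := by
  have hsphere : ∀ z ∈ Metric.sphere s (1 / 4), ‖riemannZeta₁ z‖ ≤ 4 * (‖s‖ + 2) ^ 2 := by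
    intro z hz
    rw [mem_sphere_iff_norm] at hz
    have hre : |(z - s).re| ≤ 1 / 4 := hz ▸ abs_re_le_norm (z - s)
    have hnorm : ‖z‖ ≤ ‖s‖ + 1 / 4 := by linarith [norm_le_norm_add_norm_sub' z s]
    rw [sub_re, abs_le] at hre
    refine (norm_riemannZeta₁_le_of_quarter_le_re (by linarith)).trans ?_
    gcongr 4 * ?_ ^ 2
    linarith
  refine (norm_deriv_le_of_forall_mem_sphere_norm_le (by norm_num)
    differentiable_riemannZeta₁.diffContOnCl hsphere).trans_eq ?_
  ring

theorem norm_riemannZeta₁_sub_le {s w : ℂ} {R : ℝ} (hs : 1 / 2 ≤ s.re) (hw : 1 / 2 ≤ w.re)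
    (hsR : ‖s‖ ≤ R) (hwR : ‖w‖ ≤ R) :
    ‖riemannZeta₁ s - riemannZeta₁ w‖ ≤ 16 * (R + 2) ^ 2 * ‖s - w‖ := by
  have hconvex : Convex ℝ ({z : ℂ | 1 / 2 ≤ z.re} ∩ Metric.closedBall 0 R) :=
    (convex_halfSpace_re_ge _).inter (convex_closedBall 0 R)
  refine hconvex.norm_image_sub_le_of_norm_deriv_le (𝕜 := ℂ)
    (fun z _ => differentiable_riemannZeta₁ z) (fun z hz => ?_)
    ⟨hw, by simpa using hwR⟩ ⟨hs, by simpa using hsR⟩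
  refine (norm_deriv_riemannZeta₁_le hz.1).trans ?_
  gcongr
  exact mem_closedBall_zero_iff.mp hz.2

/-! ### The generating function of the Fourier coefficients -/

theorem riemannZeta₁_conj (s : ℂ) : riemannZeta₁ (conj s) = conj (riemannZeta₁ s) := by
  rcases eq_or_ne s 1 with rfl | hs
  · simp
  · have hs' : conj s ≠ 1 := fun h => hs (by rw [← conj_conj s, h, map_one])
    rw [riemannZeta₁_eq_mul hs', riemannZeta₁_eq_mul hs, riemannZeta_conj, map_mul, map_sub,
      map_one]

theorem iteratedDeriv_conj_of_conj {f : ℂ → ℂ} (hf : ∀ s, f (conj s) = conj (f s)) (j : ℕ)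
    (s : ℂ) : iteratedDeriv j f (conj s) = conj (iteratedDeriv j f s) := by
  induction j generalizing s with
  | zero => simpa using hf s
  | succ j ih =>
    have hsymm : conj ∘ iteratedDeriv j f ∘ conj = iteratedDeriv j f := funext fun z => by
      simp [ih]
    rw [iteratedDeriv_succ]
    conv_lhs => rw [← hsymm]
    rw [deriv_conj_conj, Function.comp_apply, Function.comp_apply, conj_conj]

theorem ofReal_lam (k j : ℕ) : (lam k j : ℂ) = iteratedDeriv j (zetaPowAux k) 1 := by
  have hsymm := iteratedDeriv_conj_of_conj (f := zetaPowAux k)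
    (fun s => by simp only [zetaPowAux_eq, riemannZeta₁_conj, map_pow]) j 1
  rw [map_one] at hsymm
  exact conj_eq_iff_re.mp hsymm.symm

/-- The Taylor coefficient of `((s - 1) ζ(s)) ^ k` at `s = 1`, so that `ζ ^ k` has the Laurent
expansion `∑ zetaPowCoeff k j * (s - 1) ^ (j - k)`. -/
noncomputable def zetaPowCoeff (k j : ℕ) : ℝ := lam k j / (Nat.factorial j)

theorem hasSum_zetaPowCoeff (k : ℕ) (u : ℂ) :
    HasSum (fun j => (zetaPowCoeff k j : ℂ) * u ^ j) (riemannZeta₁ (1 + u) ^ k) := by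
  have hd : Differentiable ℂ (zetaPowAux k) := by
    rw [zetaPowAux_eq]
    fun_prop
  have htaylor := hasSum_taylorSeries_of_entire hd 1 (1 + u)
  rw [congrFun (zetaPowAux_eq k) (1 + u), add_sub_cancel_left] at htaylor
  refine htaylor.congr_fun fun j => ?_
  rw [zetaPowCoeff, ofReal_div, ofReal_natCast, ofReal_lam, smul_eq_mul, smul_eq_mul]
  ring

theorem hasSum_zetaPowCoeff_shift (k m : ℕ) {u : ℂ} (hu : u ≠ 0) :
    HasSum (fun i => (zetaPowCoeff k (i + m) : ℂ) * u ^ i)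
      ((riemannZeta₁ (1 + u) ^ k - ∑ j ∈ range m, (zetaPowCoeff k j : ℂ) * u ^ j) / u ^ m) := by
  refine (((hasSum_nat_add_iff' m).mpr (hasSum_zetaPowCoeff k u)).div_const (u ^ m)).congr_fun
    fun i => ?_
  rw [pow_add, ← mul_assoc, mul_div_cancel_right₀ _ (pow_ne_zero m hu)]

theorem summable_norm_zetaPowCoeff_shift (k m : ℕ) {x : ℝ} (hx : 0 < x) :
    Summable fun i => ‖(zetaPowCoeff k (i + m) : ℂ)‖ * x ^ i := by
  simpa [abs_of_pos hx] using
    (hasSum_zetaPowCoeff_shift k m (ofReal_ne_zero.mpr hx.ne')).summable.norm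

theorem ell_natCast_succ (k m : ℕ) :
    ell k (m + 1 : ℕ) =
      (-1) ^ (m + 1) * ∑ i ∈ range (m + 1), (m.choose i : ℝ) * zetaPowCoeff k (i + (k + 1)) := by
  have hshift := sum_Ico_add' (fun j => (m.choose (j - 1) : ℝ) * zetaPowCoeff k (j + k)) 0 (m + 1) 1
  simp only [add_tsub_cancel_right, add_assoc, add_comm 1 k] at hshift
  rw [ell, if_pos (by push_cast; omega), Int.toNat_natCast, range_eq_Ico, hshift]
  refine congrArg _ (sum_congr (by ext; simp only [mem_Icc, mem_Ico]; omega) fun j _ => ?_)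
  rw [zetaPowCoeff, add_tsub_cancel_right, mul_div_assoc]

/-- The part of the expansion of `ζ ^ k` in powers of `1 / s - 1` with negative exponents: the polar
part of `ζ ^ k` at `s = 1`, normalised so that `ell k 0` becomes the constant term of the rest. -/
noncomputable def zetaPolarPart (k : ℕ) (s : ℂ) : ℂ :=
  ∑ j ∈ range (k + 1), (zetaPowCoeff k j : ℂ) / (s - 1) ^ (k - j) - ell k 0

theorem norm_one_div_sub_one_sq {s : ℂ} (hs : s ≠ 0) :
    ‖1 / s - 1‖ ^ 2 = 1 - (2 * s.re - 1) / ‖s‖ ^ 2 := by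
  have hpos : 0 < ‖s‖ ^ 2 := by positivity
  rw [div_sub_one hs, norm_div, div_pow, eq_sub_iff_add_eq, ← add_div, div_eq_one_iff_eq hpos.ne',
    ← normSq_eq_norm_sq, ← normSq_eq_norm_sq, normSq_apply, normSq_apply]
  simp only [sub_re, one_re, sub_im, one_im]
  ring

theorem norm_one_div_sub_one_lt_one_iff {s : ℂ} : ‖1 / s - 1‖ < 1 ↔ 1 / 2 < s.re := by
  rcases eq_or_ne s 0 with rfl | hs
  · norm_num
  · rw [← sq_lt_one_iff₀ (norm_nonneg _), norm_one_div_sub_one_sq hs, sub_lt_self_iff,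
      div_pos_iff_of_pos_right (by positivity)]
    constructor <;> intro h <;> linarith

theorem riemannZeta_pow_sub_sum_zetaPowCoeff (k : ℕ) {s : ℂ} (hs : s ≠ 1) :
    riemannZeta s ^ k - ∑ j ∈ range (k + 1), (zetaPowCoeff k j : ℂ) / (s - 1) ^ (k - j) =
      (riemannZeta₁ s ^ k - ∑ j ∈ range (k + 1), (zetaPowCoeff k j : ℂ) * (s - 1) ^ j) /
        (s - 1) ^ k := by
  have hu : s - 1 ≠ 0 := sub_ne_zero.mpr hs
  rw [sub_div, riemannZeta₁_eq_mul hs, mul_pow, mul_div_cancel_left₀ _ (pow_ne_zero k hu), sum_div]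
  congr 1
  refine sum_congr rfl fun j hj => ?_
  rw [pow_sub₀ _ hu (Nat.lt_succ_iff.mp (mem_range.mp hj)), div_eq_mul_inv, div_eq_mul_inv,
    mul_inv, inv_inv, mul_assoc, mul_comm ((s - 1) ^ j)]

/- For `w = 1 - 1 / s` one has `w / (1 - w) = s - 1`, so the binomial transform of the regular part
of the Laurent series of `ζ ^ k` in powers of `s - 1` is its expansion in powers of `w`. -/
theorem hasSum_ell_succ (k : ℕ) {s : ℂ} (hs : 1 / 2 < s.re) (hs1 : s ≠ 1) :
    HasSum (fun m : ℕ => (ell k (m + 1 : ℕ) : ℂ) * (1 / s - 1) ^ (m + 1))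
      (riemannZeta s ^ k - ∑ j ∈ range (k + 1), (zetaPowCoeff k j : ℂ) / (s - 1) ^ (k - j)) := by
  have hs0 : s ≠ 0 := by rintro rfl; norm_num at hs
  have hu : s - 1 ≠ 0 := sub_ne_zero.mpr hs1
  set w : ℂ := 1 - 1 / s with hw
  have hw_norm : ‖w‖ < 1 := by
    rw [hw, norm_sub_rev]
    exact norm_one_div_sub_one_lt_one_iff.mpr hs
  have hw_div : w / (1 - w) = s - 1 := by rw [hw]; field_simp; ring
  have hreg := hasSum_zetaPowCoeff_shift k (k + 1) hu
  rw [add_sub_cancel] at hreg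
  have hw_pos : 0 < ‖w‖ := norm_pos_iff.mpr fun h => hu (by rw [← hw_div, h, zero_div])
  have habs := summable_norm_zetaPowCoeff_shift k (k + 1) (div_pos hw_pos (sub_pos.mpr hw_norm))
  have htransform := (hasSum_binomial_transform hw_norm habs (by rwa [hw_div])).mul_left w
  rw [← mul_div_assoc, mul_div_right_comm, hw_div, pow_succ', ← mul_div_assoc,
    mul_div_mul_left _ _ hu, ← riemannZeta_pow_sub_sum_zetaPowCoeff k hs1] at htransform
  refine htransform.congr_fun fun m => ?_
  rw [ell_natCast_succ, ← neg_sub 1 (1 / s), ← hw]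
  push_cast
  rw [mul_right_comm, ← mul_pow, neg_one_mul, neg_neg, pow_succ', mul_assoc,
    mul_comm (w ^ m)]

theorem hasSum_ell (k : ℕ) {s : ℂ} (hs : 1 / 2 < s.re) (hs1 : s ≠ 1) :
    HasSum (fun n : ℕ => (ell k n : ℂ) * (1 / s - 1) ^ n)
      (riemannZeta s ^ k - zetaPolarPart k s) := by
  rw [← hasSum_nat_add_iff' 1]
  simpa only [zetaPolarPart, sub_sub, sub_add_cancel, sum_range_one, Nat.cast_zero, pow_zero,
    mul_one] using hasSum_ell_succ k hs hs1

theorem exists_norm_zetaPolarPart_le (k : ℕ) {r : ℝ} (hr : 0 < r) :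
    ∃ B, 0 ≤ B ∧ ∀ s : ℂ, r ≤ ‖s - 1‖ → ‖zetaPolarPart k s‖ ≤ B := by
  refine ⟨∑ j ∈ range (k + 1), |zetaPowCoeff k j| / r ^ (k - j) + |ell k 0|, by positivity,
    fun s hs => (norm_sub_le _ _).trans (add_le_add ?_ (norm_real _).le)⟩
  refine norm_sum_le_of_le _ fun j _ => ?_
  rw [norm_div, norm_pow, norm_real, Real.norm_eq_abs]
  gcongr

/-! ### Consequences of the Lindelöf Hypothesis -/

theorem norm_sub_one_eq_norm_of_re_eq_half {s : ℂ} (hs : s.re = 1 / 2) : ‖s - 1‖ = ‖s‖ := by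
  rw [norm_def, norm_def, normSq_apply, normSq_apply, sub_re, sub_im, one_re, one_im, hs]
  norm_num

namespace LindelofHypothesis

variable {ε : ℝ}

theorem exists_norm_riemannZeta₁_le_of_re_eq_half (h : LindelofHypothesis) (hε : 0 < ε) :
    ∃ A, ∀ s : ℂ, s.re = 1 / 2 → ‖riemannZeta₁ s‖ ≤ A * ‖s‖ ^ (1 + ε) := by
  obtain ⟨C, hC⟩ := h ε hε
  refine ⟨|C| + 25 * 2 ^ (1 + ε), fun s hs => ?_⟩
  have hnorm : 1 / 2 ≤ ‖s‖ := hs ▸ re_le_norm s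
  rw [add_mul]
  rcases le_total 1 |s.im| with him | him
  · have hs1 : s ≠ 1 := fun h1 => by norm_num [h1] at him
    have hzeta : ‖riemannZeta s‖ ≤ C * |s.im| ^ ε := by
      have hs_eq : (1 / 2 + s.im * I : ℂ) = s := Complex.ext (by simp [hs]) (by simp)
      simpa only [hs_eq] using hC s.im him
    refine le_add_of_le_of_nonneg ?_ (by positivity)
    calc ‖riemannZeta₁ s‖ = ‖s‖ * ‖riemannZeta s‖ := by
          rw [riemannZeta₁_eq_mul hs1, norm_mul, norm_sub_one_eq_norm_of_re_eq_half hs]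
      _ ≤ ‖s‖ * (|C| * ‖s‖ ^ ε) := by
          refine mul_le_mul_of_nonneg_left (hzeta.trans ?_) (norm_nonneg s)
          gcongr
          exacts [le_abs_self C, abs_im_le_norm s]
      _ = |C| * ‖s‖ ^ (1 + ε) := by
          rw [Real.rpow_add (by linarith), Real.rpow_one, mul_left_comm]
  · have hle : ‖s‖ ≤ 3 / 2 := by
      have := norm_le_abs_re_add_abs_im s
      rw [hs, abs_of_pos one_half_pos] at this
      linarith
    refine le_add_of_nonneg_of_le (by positivity) ?_
    calc ‖riemannZeta₁ s‖ ≤ 4 * (‖s‖ + 1) ^ 2 :=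
          norm_riemannZeta₁_le_of_quarter_le_re (by linarith)
      _ ≤ 25 * 1 := by nlinarith
      _ ≤ 25 * (2 * ‖s‖) ^ (1 + ε) := by
          gcongr
          exact Real.one_le_rpow (by linarith) (by linarith)
      _ = 25 * 2 ^ (1 + ε) * ‖s‖ ^ (1 + ε) := by
          rw [Real.mul_rpow two_pos.le (norm_nonneg s), mul_assoc]

theorem exists_norm_riemannZeta₁_le (h : LindelofHypothesis) (hε : 0 < ε) :
    ∃ A, ∀ s : ℂ, 1 / 2 ≤ s.re → ‖riemannZeta₁ s‖ ≤ A * ‖s‖ ^ (1 + ε) := by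
  obtain ⟨A, hA⟩ := h.exists_norm_riemannZeta₁_le_of_re_eq_half hε
  refine ⟨A, fun s hs => norm_le_rpow_of_le_re (b := 2) one_half_pos
    differentiable_riemannZeta₁.diffContOnCl ?_ ?_ hA hs⟩
  · refine IsBigO.of_bound 36 (eventually_inf_principal.mpr (Eventually.of_forall fun w hw => ?_))
    have hre : 1 / 2 < w.re := hw
    have hnorm := re_le_norm w
    rw [Real.rpow_two, norm_pow, norm_norm]
    refine (norm_riemannZeta₁_le_of_quarter_le_re (by linarith)).trans ?_
    nlinarith
  · refine IsBigO.of_bound 2 ((eventually_ge_atTop 1).mono fun x hx => ?_)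
    have hx0 : 0 < x := by linarith
    have hsub : ‖(x : ℂ) - 1‖ = x - 1 := by
      rw [← ofReal_one, ← ofReal_sub, Complex.norm_of_nonneg (by linarith)]
    have hle := norm_riemannZeta₁_le (s := x) (by simpa using hx0)
    rw [Complex.norm_of_nonneg hx0.le, hsub, ofReal_re, mul_div_cancel_left₀ _ hx0.ne'] at hle
    rw [Complex.norm_of_nonneg hx0.le, Real.norm_of_nonneg (by positivity)]
    have hpow : x ≤ x ^ (1 + ε) := Real.self_le_rpow_of_one_le hx (by linarith)
    linarith

theorem exists_norm_riemannZeta_le (h : LindelofHypothesis) (hε : 0 < ε) {r : ℝ} (hr : 0 < r) :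
    ∃ C, ∀ s : ℂ, 1 / 2 ≤ s.re → r ≤ ‖s - 1‖ → ‖riemannZeta s‖ ≤ C * ‖s‖ ^ ε := by
  obtain ⟨A, hA⟩ := h.exists_norm_riemannZeta₁_le hε
  refine ⟨|A| * (1 + 1 / r), fun s hs hsr => ?_⟩
  have hpos : 0 < ‖s - 1‖ := hr.trans_le hsr
  have hnorm_le : ‖s‖ ≤ (1 + 1 / r) * ‖s - 1‖ := by
    have htri := norm_add_le (s - 1) 1
    have hone : 1 ≤ 1 / r * ‖s - 1‖ := by rwa [one_div_mul_eq_div, one_le_div hr]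
    rw [sub_add_cancel, norm_one] at htri
    linarith
  refine le_of_mul_le_mul_left ?_ hpos
  calc ‖s - 1‖ * ‖riemannZeta s‖ = ‖riemannZeta₁ s‖ := by
        rw [riemannZeta₁_eq_mul (sub_ne_zero.mp (norm_pos_iff.mp hpos)), norm_mul]
    _ ≤ |A| * ‖s‖ ^ (1 + ε) := (hA s hs).trans (by gcongr; exact le_abs_self A)
    _ = |A| * (‖s‖ * ‖s‖ ^ ε) := by
        rw [Real.rpow_add (by linarith [re_le_norm s]), Real.rpow_one]
    _ ≤ |A| * ((1 + 1 / r) * ‖s - 1‖ * ‖s‖ ^ ε) := by gcongr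
    _ = ‖s - 1‖ * (|A| * (1 + 1 / r) * ‖s‖ ^ ε) := by ring

theorem exists_norm_riemannZeta_pow_sub_zetaPolarPart_le (h : LindelofHypothesis) (hε : 0 < ε)
    {k : ℕ} (hk : 0 < k) {r : ℝ} (hr : 0 < r) :
    ∃ M, ∀ s : ℂ, 1 / 2 ≤ s.re → r ≤ ‖s - 1‖ →
      ‖riemannZeta s ^ k - zetaPolarPart k s‖ ≤ M * ‖s‖ ^ ε := by
  obtain ⟨C, hC⟩ := h.exists_norm_riemannZeta_le (ε := ε / k) (by positivity) hr
  obtain ⟨B, hB0, hB⟩ := exists_norm_zetaPolarPart_le k hr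
  refine ⟨C ^ k + B * 2 ^ ε, fun s hs hsr => ?_⟩
  have hpow : ‖riemannZeta s ^ k‖ ≤ C ^ k * ‖s‖ ^ ε := by
    calc ‖riemannZeta s ^ k‖ ≤ (C * ‖s‖ ^ (ε / k)) ^ k := by
          rw [norm_pow]
          gcongr
          exact hC s hs hsr
      _ = C ^ k * ‖s‖ ^ ε := by
          rw [mul_pow, ← Real.rpow_mul_natCast (norm_nonneg s),
            div_mul_cancel₀ _ (Nat.cast_ne_zero.mpr hk.ne')]
  have hpolar : ‖zetaPolarPart k s‖ ≤ B * 2 ^ ε * ‖s‖ ^ ε := by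
    rw [mul_assoc, ← Real.mul_rpow two_pos.le (norm_nonneg s)]
    refine (hB s hsr).trans (le_mul_of_one_le_right hB0 (Real.one_le_rpow ?_ hε.le))
    linarith [re_le_norm s]
  rw [add_mul]
  exact (norm_sub_le _ _).trans (add_le_add hpow hpolar)

end LindelofHypothesis

theorem continuousOn_zetaPolarPart (k : ℕ) : ContinuousOn (zetaPolarPart k) {1}ᶜ := by
  unfold zetaPolarPart
  refine (continuousOn_finsetSum _ fun j _ => continuousOn_const.div (by fun_prop) fun s hs =>
    pow_ne_zero _ (sub_ne_zero.mpr hs)).sub continuousOn_const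

/-- The function `ζ ^ k` without its polar part, transplanted to the unit disc by the Möbius map
`z ↦ 1 / (1 + z)` onto the half-plane `1 / 2 < re s`; its Taylor coefficients are `ell k n`. -/
noncomputable def zetaPowDisc (k : ℕ) (z : ℂ) : ℂ :=
  riemannZeta (1 / (1 + z)) ^ k - zetaPolarPart k (1 / (1 + z))

section Disc

variable {z : ℂ}

theorem re_one_add_pos (hz : ‖z‖ < 1) : 0 < (1 + z).re := by
  rw [add_re, one_re]
  linarith [neg_abs_le z.re, abs_re_le_norm z]

theorem half_lt_re_one_div_one_add (hz : ‖z‖ < 1) : 1 / 2 < (1 / (1 + z)).re := by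
  rwa [← norm_one_div_sub_one_lt_one_iff, one_div_one_div, add_sub_cancel_left]

theorem one_div_one_add_ne_one (hz : z ≠ 0) : 1 / (1 + z) ≠ 1 := by
  rwa [one_div, Ne, inv_eq_one, add_eq_left]

theorem norm_one_div_one_add_sub_one (hz : ‖z‖ < 1) :
    ‖1 / (1 + z) - 1‖ = ‖z‖ * ‖1 / (1 + z)‖ := by
  have hne : 1 + z ≠ 0 := fun h => (re_one_add_pos hz).ne' (by rw [h, zero_re])
  rw [div_sub_one hne, sub_add_cancel_left, norm_div, norm_neg, norm_div, norm_one,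
    mul_one_div]

theorem hasSum_zetaPowDisc (k : ℕ) (hz0 : z ≠ 0) (hz : ‖z‖ < 1) :
    HasSum (fun n : ℕ => (ell k n : ℂ) * z ^ n) (zetaPowDisc k z) := by
  simpa only [zetaPowDisc, one_div_one_div, add_sub_cancel_left] using
    hasSum_ell k (half_lt_re_one_div_one_add hz) (one_div_one_add_ne_one hz0)

theorem continuousAt_zetaPowDisc (k : ℕ) (hz0 : z ≠ 0) (hz : ‖z‖ < 1) :
    ContinuousAt (zetaPowDisc k) z := by
  have hne : 1 + z ≠ 0 := fun h => (re_one_add_pos hz).ne' (by rw [h, zero_re])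
  have hs1 := one_div_one_add_ne_one hz0
  have hzeta : ContinuousAt (fun s => riemannZeta s ^ k - zetaPolarPart k s) (1 / (1 + z)) :=
    ((differentiableAt_riemannZeta hs1).continuousAt.pow k).sub
      ((continuousOn_zetaPolarPart k).continuousAt (isOpen_ne.mem_nhds hs1))
  exact hzeta.comp (f := fun z => 1 / (1 + z)) (by fun_prop (disch := exact hne))

end Disc

theorem hasSum_sq_ell_mul_pow (k : ℕ) {ρ : ℝ} (h0 : 0 < ρ) (h1 : ρ < 1) :
    HasSum (fun n : ℕ => ell k n ^ 2 * ρ ^ (2 * n))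
      (Real.circleAverage (fun z => ‖zetaPowDisc k z‖ ^ 2) 0 ρ) := by
  have hparseval := hasSum_sq_norm_mul_pow_circleAverage (a := fun n => (ell k n : ℂ))
    (f := zetaPowDisc k) (ρ := ρ) fun z hz => by
      rw [abs_of_pos h0, mem_sphere_zero_iff_norm] at hz
      exact hasSum_zetaPowDisc k (norm_pos_iff.mp (hz ▸ h0)) (hz ▸ h1)
  simpa only [norm_real, Real.norm_eq_abs, sq_abs] using hparseval

theorem LindelofHypothesis.exists_norm_zetaPowDisc_le (h : LindelofHypothesis) {ε : ℝ}
    (hε : 0 < ε) {k : ℕ} (hk : 0 < k) :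
    ∃ M, ∀ z : ℂ, 1 / 2 ≤ ‖z‖ → ‖z‖ < 1 → ‖zetaPowDisc k z‖ ≤ M * ‖1 + z‖ ^ (-ε) := by
  obtain ⟨M, hM⟩ :=
    h.exists_norm_riemannZeta_pow_sub_zetaPolarPart_le hε hk (r := 1 / 4) (by norm_num)
  refine ⟨M, fun z hz_ge hz => ?_⟩
  have hre := half_lt_re_one_div_one_add hz
  have hfar : 1 / 4 ≤ ‖1 / (1 + z) - 1‖ := by
    rw [norm_one_div_one_add_sub_one hz]
    nlinarith [re_le_norm (1 / (1 + z))]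
  simpa only [zetaPowDisc, norm_div, norm_one, one_div, norm_inv, Real.inv_rpow (norm_nonneg _),
    ← Real.rpow_neg (norm_nonneg _)] using hM _ hre.le hfar

theorem circleAverage_norm_one_add_rpow_le {p ρ : ℝ} (hp : |p| < 1) (h0 : 0 < ρ) (h1 : ρ < 1) :
    Real.circleAverage (fun z => ‖1 + z‖ ^ p) 0 ρ ≤ 1 / Real.cos (p * (π / 2)) := by
  have hd : Differentiable ℂ fun z : ℂ => 1 + z := by fun_prop
  simpa using circleAverage_norm_rpow_le (c := 0) h0 hd.diffContOnCl
    (fun z hz => re_one_add_pos ((mem_closedBall_zero_iff.mp hz).trans_lt h1)) hp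

theorem LindelofHypothesis.exists_circleAverage_sq_norm_zetaPowDisc_le (h : LindelofHypothesis)
    {k : ℕ} (hk : 0 < k) :
    ∃ c, ∀ ρ ∈ Set.Ioo (1 / 2 : ℝ) 1,
      Real.circleAverage (fun z => ‖zetaPowDisc k z‖ ^ 2) 0 ρ ≤ c := by
  obtain ⟨M, hM⟩ := h.exists_norm_zetaPowDisc_le (ε := 1 / 4) (by norm_num) hk
  refine ⟨M ^ 2 * (1 / Real.cos (-(1 / 2) * (π / 2))), fun ρ hρ => ?_⟩
  have h0 : 0 < ρ := by linarith [hρ.1]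
  have hnorm : ∀ z ∈ Metric.sphere (0 : ℂ) ρ, ‖z‖ = ρ := fun z hz => by simpa using hz
  have hlt : ∀ z ∈ Metric.sphere (0 : ℂ) ρ, ‖z‖ < 1 := fun z hz => hnorm z hz ▸ hρ.2
  calc Real.circleAverage (fun z => ‖zetaPowDisc k z‖ ^ 2) 0 ρ
      ≤ Real.circleAverage (fun z => M ^ 2 • ‖1 + z‖ ^ (-(1 / 2) : ℝ)) 0 ρ := by
        refine Real.circleAverage_mono (ContinuousOn.circleIntegrable h0.le fun z hz => ?_)
          (ContinuousOn.circleIntegrable h0.le fun z hz => ?_) fun z hz => ?_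
        · have hz0 : z ≠ 0 := norm_pos_iff.mp (hnorm z hz ▸ h0)
          exact ((continuousAt_zetaPowDisc k hz0 (hlt z hz)).norm.pow 2).continuousWithinAt
        · have hne : ‖1 + z‖ ≠ 0 := ((re_one_add_pos (hlt z hz)).trans_le (re_le_norm _)).ne'
          fun_prop (disch := exact Or.inl hne)
        · rw [abs_of_pos h0] at hz
          have hle := hM z (hnorm z hz ▸ hρ.1.le) (hlt z hz)
          calc ‖zetaPowDisc k z‖ ^ 2 ≤ (M * ‖1 + z‖ ^ (-(1 / 4) : ℝ)) ^ 2 := by gcongr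
            _ = M ^ 2 • ‖1 + z‖ ^ (-(1 / 2) : ℝ) := by
              rw [mul_pow, ← Real.rpow_mul_natCast (norm_nonneg _), smul_eq_mul]
              norm_num
    _ = M ^ 2 * Real.circleAverage (fun z => ‖1 + z‖ ^ (-(1 / 2) : ℝ)) 0 ρ :=
        Real.circleAverage_fun_smul
    _ ≤ M ^ 2 * (1 / Real.cos (-(1 / 2) * (π / 2))) := by
        gcongr
        exact circleAverage_norm_one_add_rpow_le (by norm_num [abs_lt]) h0 hρ.2

theorem LindelofHypothesis.summable_sq_ell (h : LindelofHypothesis) {k : ℕ} (hk : 0 < k) :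
    Summable fun n : ℕ => ell k n ^ 2 := by
  obtain ⟨c, hc⟩ := h.exists_circleAverage_sq_norm_zetaPowDisc_le hk
  refine summable_of_tendsto_of_hasSum_le (l := 𝓝[<] (1 : ℝ)) (c := c)
    (f := fun ρ (n : ℕ) => ell k n ^ 2 * ρ ^ (2 * n)) ?_ fun n => ?_
  · filter_upwards [Ioo_mem_nhdsLT (one_half_lt_one (α := ℝ))] with ρ hρ
    have h0 : 0 < ρ := by linarith [hρ.1]
    exact ⟨fun n => by positivity, _, hc ρ hρ, hasSum_sq_ell_mul_pow k h0 hρ.2⟩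
  · exact tendsto_nhdsWithin_of_tendsto_nhds (Continuous.tendsto' (by fun_prop) _ _ (by simp))

/-! ### Consequences of square summability -/

theorem one_sub_norm_one_div_sub_one_sq_inv {s : ℂ} (hs : s ≠ 0) :
    (1 - ‖1 / s - 1‖ ^ 2)⁻¹ = ‖s‖ ^ 2 / (2 * s.re - 1) := by
  rw [norm_one_div_sub_one_sq hs, sub_sub_cancel, inv_div]

theorem one_le_sq_norm_div_two_mul_re_sub_one {s : ℂ} (hs : 1 / 2 < s.re) :
    1 ≤ ‖s‖ ^ 2 / (2 * s.re - 1) := by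
  rw [one_le_div (by linarith)]
  nlinarith [re_le_norm s, sq_nonneg (s.re - 1)]

theorem exists_norm_riemannZeta_pow_le_of_summable {k : ℕ}
    (h : Summable fun n : ℕ => ell k n ^ 2) {r : ℝ} (hr : 0 < r) :
    ∃ D, 0 ≤ D ∧ ∀ s : ℂ, 1 / 2 < s.re → r ≤ ‖s - 1‖ →
      ‖riemannZeta s‖ ^ k ≤ D * (‖s‖ ^ 2 / (2 * s.re - 1)) := by
  obtain ⟨B, hB0, hB⟩ := exists_norm_zetaPolarPart_le k hr
  obtain ⟨A, hA⟩ := h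
  have hA0 : 0 ≤ A := hA.nonneg fun n => sq_nonneg _
  refine ⟨A + 1 + B, by positivity, fun s hs hsr => ?_⟩
  set Q := ‖s‖ ^ 2 / (2 * s.re - 1)
  have hQ : 1 ≤ Q := one_le_sq_norm_div_two_mul_re_sub_one hs
  have hs0 : s ≠ 0 := fun h0 => by norm_num [h0] at hs
  have hs1 : s ≠ 1 := sub_ne_zero.mp (norm_pos_iff.mp (hr.trans_le hsr))
  set X := riemannZeta s ^ k - zetaPolarPart k s with hX
  have hXsq : ‖X‖ ^ 2 ≤ A * Q := by
    have hle := sq_norm_le_of_hasSum_mul_pow (a := fun n : ℕ => (ell k n : ℂ)) (A := A)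
      (by simpa only [norm_real, Real.norm_eq_abs, sq_abs] using hA)
      (norm_one_div_sub_one_lt_one_iff.mpr hs) (hasSum_ell k hs hs1)
    rwa [one_sub_norm_one_div_sub_one_sq_inv hs0] at hle
  calc ‖riemannZeta s‖ ^ k = ‖X + zetaPolarPart k s‖ := by rw [hX, sub_add_cancel, norm_pow]
    _ ≤ ‖X‖ + B := norm_add_le_of_le le_rfl (hB s hsr)
    _ ≤ (‖X‖ ^ 2 + 1) + B := by nlinarith [sq_nonneg (‖X‖ - 1)]
    _ ≤ (A * Q + Q) + B * Q := by gcongr; exact le_mul_of_one_le_right hB0 hQ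
    _ = (A + 1 + B) * Q := by ring

theorem exists_norm_riemannZeta_le_of_forall_summable
    (h : ∀ k : ℕ, 0 < k → Summable fun n : ℕ => ell k n ^ 2) {ε r : ℝ} (hε : 0 < ε)
    (hr : 0 < r) :
    ∃ D, 0 ≤ D ∧ ∀ s : ℂ, 1 / 2 < s.re → r ≤ ‖s - 1‖ →
      ‖riemannZeta s‖ ≤ D * (‖s‖ ^ 2 / (2 * s.re - 1)) ^ ε := by
  obtain ⟨n, hn⟩ := exists_nat_one_div_lt hε
  obtain ⟨D, hD0, hD⟩ := exists_norm_riemannZeta_pow_le_of_summable (h (n + 1) n.succ_pos) hr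
  refine ⟨D ^ (1 / (n + 1) : ℝ), by positivity, fun s hs hsr => ?_⟩
  have hQ := one_le_sq_norm_div_two_mul_re_sub_one hs
  calc ‖riemannZeta s‖ = (‖riemannZeta s‖ ^ (n + 1)) ^ (1 / (n + 1) : ℝ) := by
        rw [one_div, ← Nat.cast_succ, Real.pow_rpow_inv_natCast (norm_nonneg _) n.succ_ne_zero]
    _ ≤ (D * (‖s‖ ^ 2 / (2 * s.re - 1))) ^ (1 / (n + 1) : ℝ) := by
        gcongr
        exact hD s hs hsr
    _ = D ^ (1 / (n + 1) : ℝ) * (‖s‖ ^ 2 / (2 * s.re - 1)) ^ (1 / (n + 1) : ℝ) :=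
        Real.mul_rpow hD0 (zero_le_one.trans hQ)
    _ ≤ _ := by gcongr

section CriticalLine

variable {s : ℂ}

theorem inv_sq_norm_le_one (him : 1 ≤ |s.im|) : (‖s‖ ^ 2)⁻¹ ≤ 1 :=
  inv_le_one_of_one_le₀ (one_le_pow₀ (him.trans (abs_im_le_norm s)))

theorem norm_add_inv_sq_norm_le (him : 1 ≤ |s.im|) : ‖s + ((‖s‖ ^ 2)⁻¹ : ℝ)‖ ≤ 2 * ‖s‖ := by
  refine (norm_add_le _ _).trans ?_
  rw [Complex.norm_of_nonneg (by positivity)]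
  linarith [inv_sq_norm_le_one him, abs_im_le_norm s]

theorem half_lt_re_add_inv_sq_norm (hre : s.re = 1 / 2) :
    1 / 2 < (s + ((‖s‖ ^ 2)⁻¹ : ℝ)).re := by
  have hs0 : s ≠ 0 := fun h0 => by norm_num [h0] at hre
  rw [add_re, ofReal_re, hre]
  exact lt_add_of_pos_right _ (by positivity)

theorem one_le_norm_add_inv_sq_norm_sub_one (him : 1 ≤ |s.im|) :
    1 ≤ ‖s + ((‖s‖ ^ 2)⁻¹ : ℝ) - 1‖ := by
  refine him.trans ?_
  simpa only [sub_im, add_im, ofReal_im, one_im, add_zero, sub_zero] using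
    abs_im_le_norm (s + ((‖s‖ ^ 2)⁻¹ : ℝ) - 1)

theorem norm_riemannZeta₁_sub_add_inv_sq_norm_le (hre : s.re = 1 / 2) (him : 1 ≤ |s.im|) :
    ‖riemannZeta₁ s - riemannZeta₁ (s + ((‖s‖ ^ 2)⁻¹ : ℝ))‖ ≤ 256 := by
  have hnorm : 1 ≤ ‖s‖ := him.trans (abs_im_le_norm s)
  refine (norm_riemannZeta₁_sub_le hre.ge (half_lt_re_add_inv_sq_norm hre).le (by linarith)
    (norm_add_inv_sq_norm_le him)).trans ?_
  rw [sub_add_cancel_left, norm_neg, Complex.norm_of_nonneg (by positivity), ← div_eq_mul_inv,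
    div_le_iff₀ (by positivity)]
  nlinarith

theorem norm_riemannZeta_le_add_inv_sq_norm (hre : s.re = 1 / 2) (him : 1 ≤ |s.im|) :
    ‖riemannZeta s‖ ≤ 2 * ‖riemannZeta (s + ((‖s‖ ^ 2)⁻¹ : ℝ))‖ + 256 := by
  have hnorm : 1 ≤ ‖s‖ := him.trans (abs_im_le_norm s)
  have hs1 : s ≠ 1 := fun h1 => by norm_num [h1] at hre
  set w : ℂ := s + ((‖s‖ ^ 2)⁻¹ : ℝ) with hw
  have hw1 : w ≠ 1 := sub_ne_zero.mp
    (norm_pos_iff.mp (one_pos.trans_le (one_le_norm_add_inv_sq_norm_sub_one him)))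
  have hw_sub : ‖w - 1‖ ≤ 2 * ‖s‖ := by
    rw [hw, add_sub_right_comm]
    refine (norm_add_le _ _).trans ?_
    rw [Complex.norm_of_nonneg (by positivity), norm_sub_one_eq_norm_of_re_eq_half hre]
    linarith [inv_sq_norm_le_one him]
  refine le_of_mul_le_mul_left ?_ (one_pos.trans_le hnorm)
  calc ‖s‖ * ‖riemannZeta s‖ = ‖riemannZeta₁ s‖ := by
        rw [riemannZeta₁_eq_mul hs1, norm_mul, norm_sub_one_eq_norm_of_re_eq_half hre]
    _ ≤ ‖riemannZeta₁ w‖ + 256 :=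
        norm_le_norm_add_const_of_dist_le
          ((dist_eq_norm _ _).trans_le (norm_riemannZeta₁_sub_add_inv_sq_norm_le hre him))
    _ = ‖w - 1‖ * ‖riemannZeta w‖ + 256 := by rw [riemannZeta₁_eq_mul hw1, norm_mul]
    _ ≤ 2 * ‖s‖ * ‖riemannZeta w‖ + 256 * ‖s‖ := by
        gcongr
        linarith
    _ = ‖s‖ * (2 * ‖riemannZeta w‖ + 256) := by ring

end CriticalLine

theorem exists_norm_riemannZeta_le_of_re_eq_half_of_forall_summable
    (h : ∀ k : ℕ, 0 < k → Summable fun n : ℕ => ell k n ^ 2) {ε : ℝ} (hε : 0 < ε) :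
    ∃ C, 0 ≤ C ∧ ∀ s : ℂ, s.re = 1 / 2 → 1 ≤ |s.im| → ‖riemannZeta s‖ ≤ C * ‖s‖ ^ ε := by
  obtain ⟨D, hD0, hD⟩ :=
    exists_norm_riemannZeta_le_of_forall_summable h (ε := ε / 4) (by positivity) one_pos
  refine ⟨2 * (D * 2 ^ (ε / 4)) + 256, by positivity, fun s hre him => ?_⟩
  have hnorm : 1 ≤ ‖s‖ := him.trans (abs_im_le_norm s)
  set w : ℂ := s + ((‖s‖ ^ 2)⁻¹ : ℝ) with hw
  have hw_re : 1 / 2 < w.re := half_lt_re_add_inv_sq_norm hre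
  have hQ : ‖w‖ ^ 2 / (2 * w.re - 1) ≤ 2 * ‖s‖ ^ 4 := by
    have hw_gap : 2 * w.re - 1 = 2 * (‖s‖ ^ 2)⁻¹ := by
      rw [hw, add_re, ofReal_re, hre]
      ring
    calc ‖w‖ ^ 2 / (2 * w.re - 1) ≤ (2 * ‖s‖) ^ 2 / (2 * (‖s‖ ^ 2)⁻¹) := by
          rw [hw_gap]
          gcongr
          exact norm_add_inv_sq_norm_le him
      _ = 2 * ‖s‖ ^ 4 := by field_simp
  have hzeta : ‖riemannZeta w‖ ≤ D * 2 ^ (ε / 4) * ‖s‖ ^ ε := by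
    calc ‖riemannZeta w‖ ≤ D * (‖w‖ ^ 2 / (2 * w.re - 1)) ^ (ε / 4) :=
          hD w hw_re (one_le_norm_add_inv_sq_norm_sub_one him)
      _ ≤ D * (2 * ‖s‖ ^ 4) ^ (ε / 4) := by
          have := one_le_sq_norm_div_two_mul_re_sub_one hw_re
          gcongr
      _ = D * 2 ^ (ε / 4) * ‖s‖ ^ ε := by
          rw [Real.mul_rpow two_pos.le (by positivity), ← Real.rpow_natCast_mul (norm_nonneg s),
            mul_assoc]
          congr 3
          push_cast
          ring
  linarith [norm_riemannZeta_le_add_inv_sq_norm hre him, Real.one_le_rpow hnorm hε.le]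

theorem lindelofHypothesis_of_forall_summable
    (h : ∀ k : ℕ, 0 < k → Summable fun n : ℕ => ell k n ^ 2) : LindelofHypothesis := by
  intro ε hε
  obtain ⟨C, hC0, hC⟩ := exists_norm_riemannZeta_le_of_re_eq_half_of_forall_summable h hε
  refine ⟨C * 2 ^ ε, fun t ht => ?_⟩
  have hnorm : ‖(1 / 2 + t * I : ℂ)‖ ≤ 2 * |t| := by
    have hhalf : ‖(1 / 2 : ℂ)‖ = 1 / 2 := by norm_num
    refine (norm_add_le _ _).trans ?_
    rw [hhalf, norm_mul, norm_I, norm_real, Real.norm_eq_abs, mul_one]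
    linarith
  calc ‖riemannZeta (1 / 2 + t * I)‖ ≤ C * ‖(1 / 2 + t * I : ℂ)‖ ^ ε :=
        hC _ (by simp) (by simpa using ht)
    _ ≤ C * (2 * |t|) ^ ε := by gcongr
    _ = C * 2 ^ ε * |t| ^ ε := by rw [Real.mul_rpow two_pos.le (abs_nonneg t), mul_assoc]

theorem lindelofHypothesis_iff_forall_summable_sq_ell :
    LindelofHypothesis ↔ ∀ k : ℕ, 0 < k → Summable fun n : ℕ => ell k n ^ 2 :=
  ⟨fun h _ hk => h.summable_sq_ell hk, lindelofHypothesis_of_forall_summable⟩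

theorem stmt5 :
    LindelofHypothesis ↔ ∀ k : ℕ, 0 < k → ∃ L : ℝ,
      Tendsto (fun ρ : ℝ => ∑' n : ℕ, (ell k n) ^ 2 * ρ ^ (2 * n)) (𝓝[<] (1 : ℝ)) (𝓝 L) := by
  rw [lindelofHypothesis_iff_forall_summable_sq_ell]
  refine forall₂_congr fun k _ => (exists_tendsto_tsum_mul_pow_iff_summable
    (fun n => sq_nonneg (ell k n)) ?_).symm
  filter_upwards [Ioo_mem_nhdsLT (zero_lt_one' ℝ)] with ρ hρ
  exact (hasSum_sq_ell_mul_pow k hρ.1 hρ.2).summable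
end
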